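/- Under the multi-layer network assumptions, for each fixed ℓ ∈ {1,…,L}, define Φ_ℓ ∈ ℝ^{n×n} by Φ_ℓ = E_{w~N(0,Id)}[σ(wᵀX_{ℓ−1})ᵀ σ(wᵀX_{ℓ−1})] (the expectation conditional on X_{ℓ−1}) and Φ̃_ℓ = b_σ² X_{ℓ−1}ᵀX_{ℓ−1} + (1 − b_σ²) Id. Then almost surely as n → ∞, (1/n)‖Φ_ℓ − Φ̃_ℓ‖_F² → 0, where ‖·‖_F is the Frobenius norm. -/

import Mathlib

/-!
Lemma (approximation of the second-moment matrix): under the multi-layer network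
assumptions, `(1/n)‖Φ_ℓ − (b_σ² X_{ℓ−1}ᵀX_{ℓ−1} + (1−b_σ²)Id)‖_F² → 0` almost surely.
-/

open MeasureTheory ProbabilityTheory Filter Topology Matrix

noncomputable abbrev stdGaussian : Measure ℝ := gaussianReal 0 1

noncomputable abbrev gaussianVec (d : ℕ) : Measure (Fin d → ℝ) :=
  Measure.pi fun _ => stdGaussian

noncomputable abbrev gaussianMat (a b : ℕ) : Measure (Fin a → Fin b → ℝ) :=
  Measure.pi fun _ => gaussianVec b

/-- ℓ₂→ℓ₂ operator norm of a real matrix. -/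
noncomputable def opNorm {m n : ℕ} (X : Matrix (Fin m) (Fin n) ℝ) : ℝ :=
  ‖LinearMap.toContinuousLinearMap (Matrix.toEuclideanLin X)‖

/-- `(ε,B)`-orthonormality of the columns of a matrix. -/
def IsOrthonormal {d n : ℕ} (ε B : ℝ) (X : Matrix (Fin d) (Fin n) ℝ) : Prop :=
  (∀ α : Fin n, |(∑ i, X i α ^ 2) - 1| ≤ ε) ∧
  (∀ α β : Fin n, α ≠ β → |∑ i, X i α * X i β| ≤ ε) ∧
  opNorm X ≤ B ∧
  ∑ α : Fin n, ((∑ i, X i α ^ 2) - 1) ^ 2 ≤ B ^ 2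

open Classical in
/-- Integral of `f` against the empirical eigenvalue distribution of a symmetric matrix. -/
noncomputable def esd {n : ℕ} (M : Matrix (Fin n) (Fin n) ℝ) (f : ℝ → ℝ) : ℝ :=
  if h : M.IsHermitian then (n : ℝ)⁻¹ * ∑ α, f (h.eigenvalues α) else 0

/-- The layers `X_ℓ = σ(W_ℓ X_{ℓ-1})/√d_ℓ` of the network. -/
noncomputable def netLayer (σ : ℝ → ℝ) (d : ℕ → ℕ) (n : ℕ)
    (W : (ℓ : ℕ) → Fin (d (ℓ + 1)) → Fin (d ℓ) → ℝ)
    (X0 : Matrix (Fin (d 0)) (Fin n) ℝ) : (ℓ : ℕ) → Matrix (Fin (d ℓ)) (Fin n) ℝ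
  | 0 => X0
  | ℓ + 1 => (Real.sqrt (d (ℓ + 1)))⁻¹ • ((Matrix.of (W ℓ) * netLayer σ d n W X0 ℓ).map σ)

/-- Squared Frobenius norm. -/
def frobSq {m n : ℕ} (X : Matrix (Fin m) (Fin n) ℝ) : ℝ :=
  ∑ i, ∑ j, (X i j) ^ 2

/-!
For jointly Gaussian `(g, h)` with unit variances, Stein's identity gives
`E[σ(g) σ(h)] = b_σ² E[g h] + O(E[g h]²)`, and `E[σ(g)²] = 1`. So if the Gram matrix of `X` is
entrywise within `ε` of the identity, `Φ - Φ̃` has diagonal entries `O(ε)` and off-diagonal entries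
`O(ε²)`, and `n⁻¹ ‖Φ - Φ̃‖_F² = O(ε² + n ε⁴)` vanishes when `ε n^{1/4} → 0`.

This condition propagates through the layers. Given `X_ℓ`, the Gram matrix of `X_{ℓ+1}` is an
average of `d_{ℓ+1}` independent rank-one matrices with mean `Φ_{ℓ+1}`, itself within `O(ε)` of the
identity. The summands have exponential moments, so by a Chernoff bound and Borel–Cantelli all
entries are eventually within `O(ε + log n / √d_{ℓ+1})` of the identity.
-/

open scoped NNReal ENNReal

section GaussianMarginals

variable {m m' : ℕ}

lemma map_dotProduct_gaussianVec (x : Fin m → ℝ) :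
    (gaussianVec m).map (· ⬝ᵥ x) = gaussianReal 0 (x ⬝ᵥ x).toNNReal := by
  have hmeas : AEMeasurable (· ⬝ᵥ x) (gaussianVec m) := by fun_prop
  have := Measure.isProbabilityMeasure_map hmeas
  refine Measure.ext_of_charFun (funext fun t => ?_)
  have hfactor : ∀ w : Fin m → ℝ, Complex.exp (t * (w ⬝ᵥ x : ℝ) * Complex.I) =
      ∏ i, Complex.exp ((t * x i : ℝ) * w i * Complex.I) := fun w => by
    rw [← Complex.exp_sum, ← Finset.sum_mul, dotProduct, Complex.ofReal_sum, Finset.mul_sum]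
    push_cast
    exact congrArg _ (congrArg (· * _) (Finset.sum_congr rfl fun i _ => by ring))
  rw [charFun_apply_real, integral_map hmeas (by fun_prop)]
  simp only [hfactor]
  rw [integral_fintype_prod_eq_prod fun i (g : ℝ) => Complex.exp ((t * x i : ℝ) * g * Complex.I)]
  simp only [← charFun_apply_real, charFun_gaussianReal]
  have hnonneg : 0 ≤ x ⬝ᵥ x := dotProduct_star_self_nonneg x
  rw [← Complex.exp_sum, Real.coe_toNNReal _ hnonneg]
  simp only [dotProduct, Complex.ofReal_sum, Finset.sum_mul, Finset.sum_div, Complex.ofReal_zero,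
    mul_zero, zero_mul, zero_sub, Finset.sum_neg_distrib]
  push_cast
  exact congrArg _ (congrArg _ (Finset.sum_congr rfl fun i _ => by ring))

lemma map_dotProduct_pair_gaussianVec_congr {x y : Fin m → ℝ} {x' y' : Fin m' → ℝ}
    (hxx : x ⬝ᵥ x = x' ⬝ᵥ x') (hxy : x ⬝ᵥ y = x' ⬝ᵥ y') (hyy : y ⬝ᵥ y = y' ⬝ᵥ y') :
    (gaussianVec m).map (fun w => (w ⬝ᵥ x, w ⬝ᵥ y)) =
      (gaussianVec m').map (fun w => (w ⬝ᵥ x', w ⬝ᵥ y')) := by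
  have := Measure.isProbabilityMeasure_map (μ := gaussianVec m)
    (f := fun w => (w ⬝ᵥ x, w ⬝ᵥ y)) (by fun_prop)
  have := Measure.isProbabilityMeasure_map (μ := gaussianVec m')
    (f := fun w => (w ⬝ᵥ x', w ⬝ᵥ y')) (by fun_prop)
  refine Measure.ext_of_charFunDual (funext fun T => ?_)
  have hT : ∀ p : ℝ × ℝ, T p = T (1, 0) * p.1 + T (0, 1) * p.2 := fun p => by
    conv_lhs => rw [show p = p.1 • ((1 : ℝ), (0 : ℝ)) + p.2 • ((0 : ℝ), (1 : ℝ)) by ext <;> simp]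
    simp only [map_add, map_smul, smul_eq_mul, mul_comm]
  have hcomb : ∀ {k : ℕ} (u v : Fin k → ℝ), (T ∘ fun w => (w ⬝ᵥ u, w ⬝ᵥ v)) =
      (· ⬝ᵥ (T (1, 0) • u + T (0, 1) • v)) := fun u v => funext fun w => by
    simp [hT (_ ⬝ᵥ _, _), dotProduct_add, dotProduct_smul]
  rw [charFunDual_eq_charFun_map_one, charFunDual_eq_charFun_map_one,
    Measure.map_map (by fun_prop) (by fun_prop), Measure.map_map (by fun_prop) (by fun_prop),
    hcomb, hcomb, map_dotProduct_gaussianVec, map_dotProduct_gaussianVec]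
  simp only [dotProduct_add, add_dotProduct, dotProduct_smul, smul_dotProduct, dotProduct_comm y x,
    dotProduct_comm y' x', hxx, hxy, hyy]

lemma map_dotProduct_pair_gaussianVec_eq_cholesky {x y : Fin m → ℝ} {a r τ : ℝ}
    (hxx : x ⬝ᵥ x = a ^ 2) (hxy : x ⬝ᵥ y = a * r) (hyy : y ⬝ᵥ y = r ^ 2 + τ ^ 2) :
    (gaussianVec m).map (fun w => (w ⬝ᵥ x, w ⬝ᵥ y)) =
      (stdGaussian.prod stdGaussian).map (fun p => (a * p.1, r * p.1 + τ * p.2)) := by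
  rw [map_dotProduct_pair_gaussianVec_congr (x' := ![a, 0]) (y' := ![r, τ])
      (by simp [hxx, sq]) (by simp [hxy]) (by simp [hyy, sq]),
    ← (measurePreserving_finTwoArrow stdGaussian).map_eq,
    Measure.map_map (by fun_prop) (MeasurableEquiv.measurable _)]
  congr 1 with w <;> simp [dotProduct, mul_comm]

lemma map_dotProduct_gaussianVec_eq_map_mul {x : Fin m → ℝ} {a : ℝ} (hxx : x ⬝ᵥ x = a ^ 2) :
    (gaussianVec m).map (· ⬝ᵥ x) = stdGaussian.map (a * ·) := by
  rw [map_dotProduct_gaussianVec, gaussianReal_map_const_mul, hxx]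
  congr 1
  · simp
  · ext; simp [sq_nonneg]

end GaussianMarginals

section Stein

variable {μ : ℝ} {v : ℝ≥0} {f f' : ℝ → ℝ}

lemma hasDerivAt_gaussianPDFReal (x : ℝ) :
    HasDerivAt (gaussianPDFReal μ v) (-((x - μ) / v) * gaussianPDFReal μ v x) x := by
  have hexp : HasDerivAt
      (fun y => (√(2 * Real.pi * v))⁻¹ * Real.exp (-(y - μ) ^ 2 / (2 * v))) _ x :=
    ((((((hasDerivAt_id x).sub_const μ).pow 2).neg).div_const (2 * (v : ℝ))).exp).const_mul _
  rw [gaussianPDFReal_def]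
  convert hexp using 1
  simp only [id, Pi.neg_apply, Pi.pow_apply, Nat.cast_ofNat, Nat.add_one_sub_one, pow_one, mul_one]
  rw [← mul_neg, mul_div_mul_left _ _ two_ne_zero]
  ring

lemma integrable_gaussianReal_iff (hv : v ≠ 0) :
    Integrable f (gaussianReal μ v) ↔ Integrable fun x => f x * gaussianPDFReal μ v x := by
  rw [gaussianReal_of_var_ne_zero _ hv, integrable_withDensity_iff (measurable_gaussianPDF μ v)
    (Eventually.of_forall fun x => gaussianPDF_lt_top)]
  simp only [toReal_gaussianPDF]

theorem integral_sub_mul_gaussianReal (hf : ∀ x, HasDerivAt f (f' x) x)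
    (hint : Integrable f (gaussianReal μ v)) (hint' : Integrable f' (gaussianReal μ v))
    (hint_mul : Integrable (fun x => (x - μ) * f x) (gaussianReal μ v)) :
    ∫ x, (x - μ) * f x ∂gaussianReal μ v = v * ∫ x, f' x ∂gaussianReal μ v := by
  rcases eq_or_ne v 0 with rfl | hv
  · simp
  rw [integrable_gaussianReal_iff hv] at hint hint' hint_mul
  have hparts := integral_mul_deriv_eq_deriv_mul_of_integrable (fun x _ => hf x)
    (fun x _ => hasDerivAt_gaussianPDFReal (μ := μ) (v := v) x)
    ((hint_mul.const_mul (-(v : ℝ)⁻¹)).congr (Eventually.of_forall fun x => by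
      simp only [Pi.mul_apply]; ring)) hint' hint
  rw [integral_gaussianReal_eq_integral_smul hv, integral_gaussianReal_eq_integral_smul hv]
  have hv' : (v : ℝ) ≠ 0 := NNReal.coe_ne_zero.2 hv
  calc ∫ x, gaussianPDFReal μ v x • ((x - μ) * f x)
      = ∫ x, -v * (f x * (-((x - μ) / v) * gaussianPDFReal μ v x)) := by
        congr 1 with x
        rw [smul_eq_mul]
        field_simp
    _ = v * ∫ x, gaussianPDFReal μ v x • f' x := by
        rw [integral_const_mul, hparts, neg_mul_neg]
        simp only [smul_eq_mul, mul_comm]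

end Stein

section CubicGrowth

variable {f : ℝ → ℝ} {c : ℝ}

/-- The moment `E (1 + |g|)³` of a standard Gaussian `g`. Every Gaussian integral below has an
integrand of at most cubic growth, so this single moment serves in all estimates. -/
noncomputable def cubicMoment : ℝ := ∫ g, (1 + |g|) ^ 3 ∂stdGaussian

lemma cubicMoment_nonneg : 0 ≤ cubicMoment := integral_nonneg fun g => by positivity

lemma integrable_one_add_abs_pow (μ : ℝ) (v : ℝ≥0) (k : ℕ) :
    Integrable (fun g : ℝ => (1 + |g|) ^ k) (gaussianReal μ v) := by
  have habs : MemLp (fun g : ℝ => |g|) k (gaussianReal μ v) :=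
    (memLp_id_gaussianReal' k (ENNReal.natCast_ne_top k)).abs
  have hmem : MemLp (fun g : ℝ => 1 + |g|) k (gaussianReal μ v) := (memLp_const (1 : ℝ)).add habs
  refine hmem.integrable_norm_pow'.congr (Eventually.of_forall fun g => ?_)
  simp only [Real.norm_eq_abs, abs_of_nonneg (add_nonneg zero_le_one (abs_nonneg g))]

lemma integrable_of_abs_le_cubic (hf : Continuous f) (hle : ∀ g, |f g| ≤ c * (1 + |g|) ^ 3) :
    Integrable f stdGaussian :=
  ((integrable_one_add_abs_pow 0 1 3).const_mul c).mono' hf.aestronglyMeasurable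
    (Eventually.of_forall hle)

lemma abs_integral_le_of_abs_le_cubic (hle : ∀ g, |f g| ≤ c * (1 + |g|) ^ 3) :
    |∫ g, f g ∂stdGaussian| ≤ c * cubicMoment := by
  rw [cubicMoment, ← integral_const_mul]
  exact norm_integral_le_of_norm_le (f := f) ((integrable_one_add_abs_pow 0 1 3).const_mul c)
    (Eventually.of_forall hle)

end CubicGrowth

section LipschitzFunctions

variable {f f' : ℝ → ℝ} {K : ℝ≥0} {a : ℝ}

lemma lipschitzWith_of_abs_hasDerivAt_le {C : ℝ} (hf : ∀ x, HasDerivAt f (f' x) x)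
    (hle : ∀ x, |f' x| ≤ C) : LipschitzWith C.toNNReal f :=
  lipschitzWith_of_nnnorm_deriv_le (fun x => (hf x).differentiableAt) fun x => by
    rw [(hf x).deriv, ← NNReal.coe_le_coe, coe_nnnorm]
    exact (hle x).trans (Real.le_coe_toNNReal C)

lemma abs_le_of_lipschitzWith (hf : LipschitzWith K f) (x : ℝ) : |f x| ≤ |f 0| + K * |x| := by
  have hdist := hf.dist_le_mul x 0
  rw [Real.dist_eq, Real.dist_eq, sub_zero] at hdist
  linarith [abs_sub_abs_le_abs_sub (f x) (f 0)]

lemma abs_taylor_remainder_le (hf : ∀ x, HasDerivAt f (f' x) x) (hf' : LipschitzWith K f')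
    (y t : ℝ) : |f (t + y) - f y - t * f' y| ≤ K * t ^ 2 := by
  have hderiv : ∀ x, HasDerivAt (fun z => f z - z * f' y) (f' x - f' y) x := fun x => by
    simpa using (hf x).fun_sub ((hasDerivAt_id' x).mul_const (f' y))
  have hbound : ∀ x ∈ Metric.closedBall y |t|, ‖f' x - f' y‖ ≤ K * |t| := fun x hx =>
    (hf'.dist_le_mul x y).trans (by gcongr; exact hx)
  have hmvt := (convex_closedBall y |t|).norm_image_sub_le_of_norm_hasDerivWithin_le
    (fun x _ => (hderiv x).hasDerivWithinAt) hbound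
    (x := y) (y := t + y) (by simp) (by simp)
  calc |f (t + y) - f y - t * f' y| = ‖f (t + y) - (t + y) * f' y - (f y - y * f' y)‖ := by
        rw [Real.norm_eq_abs]; ring_nf
    _ ≤ K * |t| * ‖t + y - y‖ := hmvt
    _ = K * t ^ 2 := by rw [add_sub_cancel_right, Real.norm_eq_abs, mul_assoc, ← sq, sq_abs]

/-- A constant `A` with `|f (a g)| ≤ A (1 + |g|)` for every `K`-Lipschitz `f` and every
`|a| ≤ 2`. -/
noncomputable def growthConst (f : ℝ → ℝ) (K : ℝ≥0) : ℝ := |f 0| + 2 * K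

lemma growthConst_nonneg : 0 ≤ growthConst f K := by unfold growthConst; positivity

lemma abs_comp_mul_le (hf : LipschitzWith K f) (ha : |a| ≤ 2) (g : ℝ) :
    |f (a * g)| ≤ growthConst f K * (1 + |g|) := by
  calc |f (a * g)| ≤ |f 0| + K * (|a| * |g|) := abs_mul a g ▸ abs_le_of_lipschitzWith hf (a * g)
    _ ≤ |f 0| + K * (2 * |g|) := by gcongr
    _ ≤ growthConst f K * (1 + |g|) := by
        unfold growthConst
        nlinarith [mul_nonneg (abs_nonneg (f 0)) (abs_nonneg g), K.coe_nonneg]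

lemma abs_comp_mul_sub_le (hf : LipschitzWith K f) (a g : ℝ) :
    |f (a * g) - f g| ≤ K * |a - 1| * (1 + |g|) := by
  calc |f (a * g) - f g| ≤ K * |a * g - g| := hf.dist_le_mul (a * g) g
    _ = K * |a - 1| * |g| := by rw [← sub_one_mul, abs_mul, mul_assoc]
    _ ≤ K * |a - 1| * (1 + |g|) := by gcongr; linarith

lemma integrable_weight_mul_comp_mul {φ : ℝ → ℝ} (hf : LipschitzWith K f) (hφ : Continuous φ)
    (hφle : ∀ g, |φ g| ≤ 1 + |g|) (ha : |a| ≤ 2) :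
    Integrable (fun g => φ g * f (a * g)) stdGaussian := by
  have hfc := hf.continuous
  refine integrable_of_abs_le_cubic (c := growthConst f K) (by fun_prop) fun g => ?_
  calc |φ g * f (a * g)| ≤ (1 + |g|) * (growthConst f K * (1 + |g|)) := by
        rw [abs_mul]
        gcongr
        exacts [hφle g, abs_comp_mul_le hf ha g]
    _ = growthConst f K * (1 + |g|) ^ 2 := by ring
    _ ≤ growthConst f K * (1 + |g|) ^ 3 := by
        gcongr
        exacts [growthConst_nonneg, by simp, by norm_num]

lemma abs_integral_weight_mul_comp_mul_sub_le {φ : ℝ → ℝ} (hf : LipschitzWith K f)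
    (hφ : Continuous φ) (hφle : ∀ g, |φ g| ≤ 1 + |g|) (ha : |a| ≤ 2) :
    |∫ g, φ g * f (a * g) ∂stdGaussian - ∫ g, φ g * f g ∂stdGaussian| ≤
      K * |a - 1| * cubicMoment := by
  have hone := integrable_weight_mul_comp_mul hf hφ hφle (a := 1) (by norm_num)
  simp only [one_mul] at hone
  rw [← integral_sub (integrable_weight_mul_comp_mul hf hφ hφle ha) hone]
  refine abs_integral_le_of_abs_le_cubic fun g => ?_
  calc |φ g * f (a * g) - φ g * f g| ≤ (1 + |g|) * (K * |a - 1| * (1 + |g|)) := by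
        rw [← mul_sub, abs_mul]
        gcongr
        exacts [hφle g, abs_comp_mul_sub_le hf a g]
    _ = K * |a - 1| * (1 + |g|) ^ 2 := by ring
    _ ≤ K * |a - 1| * (1 + |g|) ^ 3 := by
        gcongr
        exacts [by simp, by norm_num]

lemma integrable_sq_comp_mul (hf : LipschitzWith K f) (ha : |a| ≤ 2) :
    Integrable (fun g => f (a * g) ^ 2) stdGaussian := by
  have hfc := hf.continuous
  refine integrable_of_abs_le_cubic (c := growthConst f K ^ 2) (by fun_prop) fun g => ?_
  calc |f (a * g) ^ 2| ≤ (growthConst f K * (1 + |g|)) ^ 2 := by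
        rw [abs_pow]
        gcongr
        exact abs_comp_mul_le hf ha g
    _ = growthConst f K ^ 2 * (1 + |g|) ^ 2 := by ring
    _ ≤ growthConst f K ^ 2 * (1 + |g|) ^ 3 := by
        gcongr
        exacts [by simp, by norm_num]

lemma abs_integral_sq_comp_mul_sub_le (hf : LipschitzWith K f) (ha : |a| ≤ 2) :
    |∫ g, f (a * g) ^ 2 ∂stdGaussian - ∫ g, f g ^ 2 ∂stdGaussian| ≤
      2 * K * growthConst f K * |a - 1| * cubicMoment := by
  have hone := integrable_sq_comp_mul hf (a := 1) (by norm_num)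
  simp only [one_mul] at hone
  rw [← integral_sub (integrable_sq_comp_mul hf ha) hone]
  refine abs_integral_le_of_abs_le_cubic fun g => ?_
  have hone : |f g| ≤ growthConst f K * (1 + |g|) := by
    simpa using abs_comp_mul_le hf (a := 1) (by norm_num) g
  calc |f (a * g) ^ 2 - f g ^ 2| = |f (a * g) + f g| * |f (a * g) - f g| := by
        rw [sq_sub_sq, abs_mul]
    _ ≤ (growthConst f K * (1 + |g|) + growthConst f K * (1 + |g|)) *
          (K * |a - 1| * (1 + |g|)) := by
        have := growthConst_nonneg (f := f) (K := K)
        gcongr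
        exacts [(abs_add_le _ _).trans (add_le_add (abs_comp_mul_le hf ha g) hone),
          abs_comp_mul_sub_le hf a g]
    _ = 2 * K * growthConst f K * |a - 1| * (1 + |g|) ^ 2 := by ring
    _ ≤ 2 * K * growthConst f K * |a - 1| * (1 + |g|) ^ 3 := by
        have := growthConst_nonneg (f := f) (K := K)
        gcongr
        exacts [by simp, by norm_num]

end LipschitzFunctions

/-- An activation `σ` with derivative `σ'` such that both are `K`-Lipschitz, normalized to have mean
zero and unit second moment under the standard Gaussian. -/
structure NormalizedActivation (σ σ' : ℝ → ℝ) (K : ℝ≥0) : Prop where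
  hasDerivAt : ∀ x, HasDerivAt σ (σ' x) x
  lipschitz : LipschitzWith K σ
  lipschitz_deriv : LipschitzWith K σ'
  integral_eq_zero : ∫ x, σ x ∂stdGaussian = 0
  integral_sq_eq_one : ∫ x, σ x ^ 2 ∂stdGaussian = 1

namespace NormalizedActivation

variable {σ σ' : ℝ → ℝ} {K : ℝ≥0} {a r τ ε : ℝ}

lemma abs_deriv_le (h : NormalizedActivation σ σ' K) (x : ℝ) : |σ' x| ≤ K := by
  simpa [(h.hasDerivAt x).deriv] using norm_deriv_le_of_lipschitz (x₀ := x) h.lipschitz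

lemma abs_integral_deriv_comp_mul_le (h : NormalizedActivation σ σ' K) (τ : ℝ) :
    |∫ g, σ' (τ * g) ∂stdGaussian| ≤ K := by
  simpa using norm_integral_le_of_norm_le_const (μ := stdGaussian) (f := fun g => σ' (τ * g))
    (Eventually.of_forall fun g => h.abs_deriv_le (τ * g))

lemma integrable_deriv_comp_mul (h : NormalizedActivation σ σ' K) (τ : ℝ) :
    Integrable (fun g => σ' (τ * g)) stdGaussian :=
  (integrable_const (K : ℝ)).mono'
    (h.lipschitz_deriv.continuous.comp (continuous_const_mul τ)).aestronglyMeasurable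
    (Eventually.of_forall fun g => h.abs_deriv_le (τ * g))

lemma integrable_comp_mul (h : NormalizedActivation σ σ' K) (ha : |a| ≤ 2) :
    Integrable (fun g => σ (a * g)) stdGaussian := by
  simpa using integrable_weight_mul_comp_mul (φ := fun _ => 1) h.lipschitz continuous_const
    (by simp) ha

lemma integrable_mul_comp_mul (h : NormalizedActivation σ σ' K) (ha : |a| ≤ 2) :
    Integrable (fun g => g * σ (a * g)) stdGaussian :=
  integrable_weight_mul_comp_mul (φ := fun g => g) h.lipschitz continuous_id (by simp) ha

lemma integral_id_mul_eq_integral_deriv (h : NormalizedActivation σ σ' K) :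
    ∫ g, g * σ g ∂stdGaussian = ∫ g, σ' g ∂stdGaussian := by
  have hσ : Integrable σ stdGaussian := by
    simpa using h.integrable_comp_mul (a := 1) (by norm_num)
  have hσ' : Integrable σ' stdGaussian := by simpa using h.integrable_deriv_comp_mul 1
  have hmul : Integrable (fun g => g * σ g) stdGaussian := by
    simpa using h.integrable_mul_comp_mul (a := 1) (by norm_num)
  simpa using integral_sub_mul_gaussianReal h.hasDerivAt hσ hσ' (by simpa using hmul)

lemma abs_integral_comp_mul_le (h : NormalizedActivation σ σ' K) (ha : |a| ≤ 2) :
    |∫ g, σ (a * g) ∂stdGaussian| ≤ K * |a - 1| * cubicMoment := by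
  simpa [h.integral_eq_zero] using abs_integral_weight_mul_comp_mul_sub_le (φ := fun _ => 1)
    h.lipschitz continuous_const (by simp) ha

lemma abs_integral_mul_comp_mul_sub_le (h : NormalizedActivation σ σ' K) (ha : |a| ≤ 2) :
    |∫ g, g * σ (a * g) ∂stdGaussian - ∫ g, σ' g ∂stdGaussian| ≤ K * |a - 1| * cubicMoment :=
  h.integral_id_mul_eq_integral_deriv ▸
    abs_integral_weight_mul_comp_mul_sub_le (φ := fun g => g) h.lipschitz
      continuous_id (by simp) ha

lemma abs_integral_deriv_comp_mul_sub_le (h : NormalizedActivation σ σ' K) (ha : |a| ≤ 2) :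
    |∫ g, σ' (a * g) ∂stdGaussian - ∫ g, σ' g ∂stdGaussian| ≤ K * |a - 1| * cubicMoment := by
  simpa using abs_integral_weight_mul_comp_mul_sub_le (φ := fun _ => 1) h.lipschitz_deriv
    continuous_const (by simp) ha

lemma abs_integral_sq_comp_mul_sub_one_le (h : NormalizedActivation σ σ' K) (ha : |a| ≤ 2) :
    |∫ g, σ (a * g) ^ 2 ∂stdGaussian - 1| ≤
      2 * K * growthConst σ K * |a - 1| * cubicMoment :=
  h.integral_sq_eq_one ▸ abs_integral_sq_comp_mul_sub_le h.lipschitz ha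

/-- The second-order Taylor remainder of `σ (r g₁ + τ g₂)` at `τ g₂`, weighted by `σ (a g₁)`. -/
def crossRemainder (σ σ' : ℝ → ℝ) (a r τ : ℝ) (p : ℝ × ℝ) : ℝ :=
  σ (a * p.1) * (σ (r * p.1 + τ * p.2) - σ (τ * p.2) - r * p.1 * σ' (τ * p.2))

lemma abs_crossRemainder_le (h : NormalizedActivation σ σ' K) (ha : |a| ≤ 2) (p : ℝ × ℝ) :
    |crossRemainder σ σ' a r τ p| ≤ growthConst σ K * K * r ^ 2 * (1 + |p.1|) ^ 3 := by
  have hA := growthConst_nonneg (f := σ) (K := K)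
  have habs : |p.1| ≤ 1 + |p.1| := by simp
  calc |crossRemainder σ σ' a r τ p|
      ≤ growthConst σ K * (1 + |p.1|) * (K * (r * p.1) ^ 2) := by
        rw [crossRemainder, abs_mul]
        gcongr
        exacts [abs_comp_mul_le h.lipschitz ha p.1,
          abs_taylor_remainder_le h.hasDerivAt h.lipschitz_deriv _ _]
    _ = growthConst σ K * K * r ^ 2 * ((1 + |p.1|) * |p.1| ^ 2) := by rw [sq_abs]; ring
    _ ≤ growthConst σ K * K * r ^ 2 * ((1 + |p.1|) * (1 + |p.1|) ^ 2) := by gcongr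
    _ = growthConst σ K * K * r ^ 2 * (1 + |p.1|) ^ 3 := by ring

lemma integrable_crossRemainder (h : NormalizedActivation σ σ' K) (ha : |a| ≤ 2) :
    Integrable (crossRemainder σ σ' a r τ) (stdGaussian.prod stdGaussian) := by
  have hσ := h.lipschitz.continuous
  have hσ' := h.lipschitz_deriv.continuous
  have hcont : Continuous (crossRemainder σ σ' a r τ) := by unfold crossRemainder; fun_prop
  exact (((integrable_one_add_abs_pow 0 1 3).comp_fst stdGaussian).const_mul _).mono'
    hcont.aestronglyMeasurable (Eventually.of_forall (h.abs_crossRemainder_le ha))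

lemma abs_integral_crossRemainder_le (h : NormalizedActivation σ σ' K) (ha : |a| ≤ 2) :
    |∫ p, crossRemainder σ σ' a r τ p ∂stdGaussian.prod stdGaussian| ≤
      growthConst σ K * K * r ^ 2 * cubicMoment := by
  have hle := norm_integral_le_of_norm_le (f := crossRemainder σ σ' a r τ)
    (((integrable_one_add_abs_pow 0 1 3).comp_fst stdGaussian).const_mul _)
    (Eventually.of_forall (h.abs_crossRemainder_le ha))
  rwa [integral_const_mul, integral_fun_fst (fun g : ℝ => (1 + |g|) ^ 3), probReal_univ,
    one_smul] at hle

lemma integral_cholesky_eq (h : NormalizedActivation σ σ' K) (ha : |a| ≤ 2) (hτ : |τ| ≤ 2) :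
    ∫ p, σ (a * p.1) * σ (r * p.1 + τ * p.2) ∂stdGaussian.prod stdGaussian =
      (∫ g, σ (a * g) ∂stdGaussian) * (∫ g, σ (τ * g) ∂stdGaussian) +
      r * ((∫ g, g * σ (a * g) ∂stdGaussian) * ∫ g, σ' (τ * g) ∂stdGaussian) +
      ∫ p, crossRemainder σ σ' a r τ p ∂stdGaussian.prod stdGaussian := by
  have hsplit : ∀ p : ℝ × ℝ, σ (a * p.1) * σ (r * p.1 + τ * p.2) =
      σ (a * p.1) * σ (τ * p.2) + r * (p.1 * σ (a * p.1) * σ' (τ * p.2)) +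
        crossRemainder σ σ' a r τ p := fun p => by unfold crossRemainder; ring
  have hzeroth := (h.integrable_comp_mul ha).mul_prod (h.integrable_comp_mul hτ)
  have hfirst :=
    ((h.integrable_mul_comp_mul ha).mul_prod (h.integrable_deriv_comp_mul τ)).const_mul r
  simp only [hsplit]
  rw [integral_add (hzeroth.fun_add hfirst) (h.integrable_crossRemainder ha),
    integral_add hzeroth hfirst, integral_const_mul,
    integral_prod_mul (fun g => σ (a * g)) (fun g => σ (τ * g)),
    integral_prod_mul (fun g => g * σ (a * g)) (fun g => σ' (τ * g))]

lemma abs_integral_mul_integral_deriv_sub_le (h : NormalizedActivation σ σ' K)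
    (ha : |a - 1| ≤ ε) (ha2 : |a| ≤ 2) (hτ : |τ - 1| ≤ 2 * ε) (hτ2 : |τ| ≤ 2) :
    |(∫ g, g * σ (a * g) ∂stdGaussian) * (∫ g, σ' (τ * g) ∂stdGaussian) -
      (∫ g, σ' g ∂stdGaussian) ^ 2 * a| ≤ K ^ 2 * (3 * cubicMoment + 1) * ε := by
  have hM := cubicMoment_nonneg
  have hε : 0 ≤ ε := (abs_nonneg _).trans ha
  have hb : |∫ g, σ' g ∂stdGaussian| ≤ K := by simpa using h.abs_integral_deriv_comp_mul_le 1
  have hq := h.abs_integral_deriv_comp_mul_le τ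
  have hpb := h.abs_integral_mul_comp_mul_sub_le ha2
  have hqb := h.abs_integral_deriv_comp_mul_sub_le hτ2
  set b := ∫ g, σ' g ∂stdGaussian
  set p := ∫ g, g * σ (a * g) ∂stdGaussian
  set q := ∫ g, σ' (τ * g) ∂stdGaussian
  calc |p * q - b ^ 2 * a| = |(p - b) * q + b * (q - b) - b ^ 2 * (a - 1)| := by ring_nf
    _ ≤ |p - b| * |q| + |b| * |q - b| + |b| ^ 2 * |a - 1| := by
        rw [← abs_mul, ← abs_mul, ← abs_pow, ← abs_mul]
        exact (abs_sub _ _).trans (add_le_add_left (abs_add_le _ _) _)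
    _ ≤ K * ε * cubicMoment * K + K * (K * (2 * ε) * cubicMoment) + K ^ 2 * ε := by
        gcongr
        · exact hpb.trans (by gcongr)
        · exact hqb.trans (by gcongr)
    _ = K ^ 2 * (3 * cubicMoment + 1) * ε := by ring

/-- The constant in the quadratic bound on the off-diagonal entries of `Φ - Φ̃`. -/
noncomputable def offDiagConst (σ : ℝ → ℝ) (K : ℝ≥0) : ℝ :=
  2 * K ^ 2 * cubicMoment ^ 2 + 2 * K ^ 2 * (3 * cubicMoment + 1) +
    4 * growthConst σ K * K * cubicMoment

lemma abs_integral_cholesky_sub_le (h : NormalizedActivation σ σ' K) (ha : |a - 1| ≤ ε)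
    (hr : |r| ≤ 2 * ε) (hτ : |τ - 1| ≤ 2 * ε) (hε : ε ≤ 1 / 2) :
    |∫ p, σ (a * p.1) * σ (r * p.1 + τ * p.2) ∂stdGaussian.prod stdGaussian -
      (∫ g, σ' g ∂stdGaussian) ^ 2 * (a * r)| ≤ offDiagConst σ K * ε ^ 2 := by
  have hM := cubicMoment_nonneg
  have hA := growthConst_nonneg (f := σ) (K := K)
  have hε0 : 0 ≤ ε := (abs_nonneg _).trans ha
  have ha2 : |a| ≤ 2 := abs_le.2 ⟨by linarith [(abs_le.1 ha).1], by linarith [(abs_le.1 ha).2]⟩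
  have hτ2 : |τ| ≤ 2 := abs_le.2 ⟨by linarith [(abs_le.1 hτ).1], by linarith [(abs_le.1 hτ).2]⟩
  have hmain := h.abs_integral_mul_integral_deriv_sub_le ha ha2 hτ hτ2
  have hmean_a := (h.abs_integral_comp_mul_le ha2).trans
    (show _ ≤ K * ε * cubicMoment by gcongr)
  have hmean_τ := (h.abs_integral_comp_mul_le hτ2).trans
    (show _ ≤ K * (2 * ε) * cubicMoment by gcongr)
  have hrem := (h.abs_integral_crossRemainder_le (r := r) (τ := τ) ha2).trans
    (show _ ≤ growthConst σ K * K * (2 * ε) ^ 2 * cubicMoment by rw [← sq_abs r]; gcongr)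
  rw [h.integral_cholesky_eq ha2 hτ2]
  set m₁ := ∫ g, σ (a * g) ∂stdGaussian
  set m₂ := ∫ g, σ (τ * g) ∂stdGaussian
  set pq := (∫ g, g * σ (a * g) ∂stdGaussian) * ∫ g, σ' (τ * g) ∂stdGaussian
  set R := ∫ p, crossRemainder σ σ' a r τ p ∂stdGaussian.prod stdGaussian
  set b := ∫ g, σ' g ∂stdGaussian
  calc |m₁ * m₂ + r * pq + R - b ^ 2 * (a * r)|
      = |m₁ * m₂ + r * (pq - b ^ 2 * a) + R| := by ring_nf
    _ ≤ |m₁| * |m₂| + |r| * |pq - b ^ 2 * a| + |R| := by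
        rw [← abs_mul, ← abs_mul]; exact abs_add_three _ _ _
    _ ≤ K * ε * cubicMoment * (K * (2 * ε) * cubicMoment) +
          2 * ε * (K ^ 2 * (3 * cubicMoment + 1) * ε) +
          growthConst σ K * K * (2 * ε) ^ 2 * cubicMoment := by gcongr
    _ = offDiagConst σ K * ε ^ 2 := by unfold offDiagConst; ring

end NormalizedActivation

section GramMatrix

lemma abs_sqrt_sub_one_le {s : ℝ} (hs : 0 ≤ s) : |√s - 1| ≤ |s - 1| := by
  calc |√s - 1| ≤ |√s - 1| * (√s + 1) :=
        le_mul_of_one_le_right (abs_nonneg _) (by linarith [Real.sqrt_nonneg s])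
    _ = |√s - 1| * |√s + 1| := by rw [abs_of_nonneg (by positivity : (0 : ℝ) ≤ √s + 1)]
    _ = |s - 1| := by
        rw [← abs_mul, mul_comm, ← sq_sub_sq, Real.sq_sqrt hs, one_pow]

lemma exists_cholesky_near_one {s t u ε : ℝ} (hs : |s - 1| ≤ ε) (ht : |t - 1| ≤ ε) (hu : |u| ≤ ε)
    (hε : ε ≤ 1 / 2) :
    ∃ a r τ : ℝ, s = a ^ 2 ∧ u = a * r ∧ t = r ^ 2 + τ ^ 2 ∧
      |a - 1| ≤ ε ∧ |r| ≤ 2 * ε ∧ |τ - 1| ≤ 2 * ε := by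
  have hs_half : 1 / 2 ≤ s := by linarith [(abs_le.1 hs).1]
  have ha_half : 1 / 2 ≤ √s := Real.le_sqrt_of_sq_le (by linarith)
  have hr_sq : (u / √s) ^ 2 ≤ ε := by
    rw [div_pow, Real.sq_sqrt (by linarith), div_le_iff₀ (by linarith), ← sq_abs]
    nlinarith [abs_nonneg u]
  have hτ_nonneg : 0 ≤ t - (u / √s) ^ 2 := by linarith [(abs_le.1 ht).1]
  refine ⟨√s, u / √s, √(t - (u / √s) ^ 2), (Real.sq_sqrt (by linarith)).symm,
    (mul_div_cancel₀ u (by linarith)).symm, by rw [Real.sq_sqrt hτ_nonneg]; ring,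
    (abs_sqrt_sub_one_le (by linarith)).trans hs, ?_, (abs_sqrt_sub_one_le hτ_nonneg).trans ?_⟩
  · rw [abs_div, abs_of_nonneg (Real.sqrt_nonneg s), div_le_iff₀ (by linarith)]
    nlinarith [abs_nonneg u]
  · rw [abs_le] at ht ⊢
    constructor <;> linarith [sq_nonneg (u / √s)]

variable {d n : ℕ}

lemma transpose_mul_self_apply (X : Matrix (Fin d) (Fin n) ℝ) (α β : Fin n) :
    (Xᵀ * X) α β = X.col α ⬝ᵥ X.col β := rfl

/-- The columns of `X` are orthonormal up to an error of `ε` in each entry of the Gram matrix. -/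
def NearOrthonormal (ε : ℝ) (X : Matrix (Fin d) (Fin n) ℝ) : Prop :=
  ∀ α β, |(Xᵀ * X) α β - (1 : Matrix (Fin n) (Fin n) ℝ) α β| ≤ ε

lemma IsOrthonormal.nearOrthonormal {ε B : ℝ} {X : Matrix (Fin d) (Fin n) ℝ}
    (hX : IsOrthonormal ε B X) : NearOrthonormal ε X := fun α β => by
  rcases eq_or_ne α β with rfl | hαβ
  · simpa [Matrix.mul_apply, sq] using hX.1 α
  · simpa [Matrix.mul_apply, hαβ] using hX.2.1 α β hαβ

namespace NearOrthonormal

variable {ε : ℝ} {X : Matrix (Fin d) (Fin n) ℝ}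

lemma abs_dotProduct_self_sub_one_le (hX : NearOrthonormal ε X) (α : Fin n) :
    |X.col α ⬝ᵥ X.col α - 1| ≤ ε := by
  simpa [transpose_mul_self_apply] using hX α α

lemma abs_dotProduct_le (hX : NearOrthonormal ε X) {α β : Fin n} (hαβ : α ≠ β) :
    |X.col α ⬝ᵥ X.col β| ≤ ε := by
  simpa [transpose_mul_self_apply, hαβ] using hX α β

end NearOrthonormal

/-- The matrix `Φ = E_w [σ(wᵀX)ᵀ σ(wᵀX)]`. -/
noncomputable def secondMoment (σ : ℝ → ℝ) (X : Matrix (Fin d) (Fin n) ℝ) :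
    Matrix (Fin n) (Fin n) ℝ :=
  Matrix.of fun α β => ∫ w, σ (w ⬝ᵥ X.col α) * σ (w ⬝ᵥ X.col β) ∂gaussianVec d

/-- The linearization `Φ̃ = b² XᵀX + (1 - b²) Id` of the second moment matrix. -/
def linearizedMoment (b : ℝ) (X : Matrix (Fin d) (Fin n) ℝ) : Matrix (Fin n) (Fin n) ℝ :=
  b ^ 2 • (Xᵀ * X) + (1 - b ^ 2) • (1 : Matrix (Fin n) (Fin n) ℝ)

end GramMatrix

namespace NormalizedActivation

variable {σ σ' : ℝ → ℝ} {K : ℝ≥0} {d n : ℕ} {ε : ℝ} {x y : Fin d → ℝ}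
  {X : Matrix (Fin d) (Fin n) ℝ}

lemma abs_integral_sq_dotProduct_sub_one_le (h : NormalizedActivation σ σ' K)
    (hx : |x ⬝ᵥ x - 1| ≤ ε) (hε : ε ≤ 1) :
    |∫ w, σ (w ⬝ᵥ x) ^ 2 ∂gaussianVec d - 1| ≤ 2 * K * growthConst σ K * ε * cubicMoment := by
  have hσ := h.lipschitz.continuous
  have hM := cubicMoment_nonneg
  have hA := growthConst_nonneg (f := σ) (K := K)
  have hxx : 0 ≤ x ⬝ᵥ x := dotProduct_star_self_nonneg x
  have ha : |√(x ⬝ᵥ x) - 1| ≤ ε := (abs_sqrt_sub_one_le hxx).trans hx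
  have hscalar : ∫ w, σ (w ⬝ᵥ x) ^ 2 ∂gaussianVec d =
      ∫ g, σ (√(x ⬝ᵥ x) * g) ^ 2 ∂stdGaussian := by
    rw [← integral_map (φ := (√(x ⬝ᵥ x) * ·)) (f := fun z => σ z ^ 2) (by fun_prop)
      (by fun_prop), ← map_dotProduct_gaussianVec_eq_map_mul (Real.sq_sqrt hxx).symm,
      integral_map (by fun_prop) (by fun_prop)]
  rw [hscalar]
  refine (h.abs_integral_sq_comp_mul_sub_one_le (abs_le.2 ?_)).trans (by gcongr)
  constructor <;> linarith [(abs_le.1 ha).1, (abs_le.1 ha).2]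

lemma abs_integral_mul_dotProduct_sub_le (h : NormalizedActivation σ σ' K)
    (hx : |x ⬝ᵥ x - 1| ≤ ε) (hy : |y ⬝ᵥ y - 1| ≤ ε) (hxy : |x ⬝ᵥ y| ≤ ε) (hε : ε ≤ 1 / 2) :
    |∫ w, σ (w ⬝ᵥ x) * σ (w ⬝ᵥ y) ∂gaussianVec d -
      (∫ g, σ' g ∂stdGaussian) ^ 2 * (x ⬝ᵥ y)| ≤ offDiagConst σ K * ε ^ 2 := by
  have hσ := h.lipschitz.continuous
  obtain ⟨a, r, τ, hxx, hxy_eq, hyy, ha, hr, hτ⟩ := exists_cholesky_near_one hx hy hxy hε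
  have hpair : ∫ w, σ (w ⬝ᵥ x) * σ (w ⬝ᵥ y) ∂gaussianVec d =
      ∫ p, σ (a * p.1) * σ (r * p.1 + τ * p.2) ∂stdGaussian.prod stdGaussian := by
    have hF : Continuous fun p : ℝ × ℝ => σ p.1 * σ p.2 := by fun_prop
    rw [← integral_map (φ := fun w : Fin d → ℝ => (w ⬝ᵥ x, w ⬝ᵥ y)) (by fun_prop)
        hF.aestronglyMeasurable, map_dotProduct_pair_gaussianVec_eq_cholesky hxx hxy_eq hyy,
      integral_map (by fun_prop) hF.aestronglyMeasurable]
  rw [hpair, hxy_eq]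
  exact h.abs_integral_cholesky_sub_le ha hr hτ hε

/-- The constant in the linear bound on the diagonal entries of `Φ - Φ̃`. -/
noncomputable def diagConst (σ : ℝ → ℝ) (K : ℝ≥0) : ℝ :=
  2 * K * growthConst σ K * cubicMoment + K ^ 2

lemma diagConst_nonneg : 0 ≤ diagConst σ K := by
  have := cubicMoment_nonneg
  have := growthConst_nonneg (f := σ) (K := K)
  unfold diagConst
  positivity

lemma offDiagConst_nonneg : 0 ≤ offDiagConst σ K := by
  have := cubicMoment_nonneg
  have := growthConst_nonneg (f := σ) (K := K)
  unfold offDiagConst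
  positivity

lemma integral_deriv_sq_le (h : NormalizedActivation σ σ' K) :
    (∫ g, σ' g ∂stdGaussian) ^ 2 ≤ K ^ 2 := by
  have hb : |∫ g, σ' g ∂stdGaussian| ≤ K := by simpa using h.abs_integral_deriv_comp_mul_le 1
  rw [← sq_abs]
  gcongr

lemma abs_secondMoment_sub_linearizedMoment_diag_le (h : NormalizedActivation σ σ' K)
    (hX : NearOrthonormal ε X) (hε : ε ≤ 1) (α : Fin n) :
    |(secondMoment σ X - linearizedMoment (∫ g, σ' g ∂stdGaussian) X) α α| ≤
      diagConst σ K * ε := by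
  have hb := h.integral_deriv_sq_le
  have hnorm := hX.abs_dotProduct_self_sub_one_le α
  have hsq := h.abs_integral_sq_dotProduct_sub_one_le hnorm hε
  set b := ∫ g, σ' g ∂stdGaussian
  set S := X.col α ⬝ᵥ X.col α with hS
  set I := ∫ w, σ (w ⬝ᵥ X.col α) ^ 2 ∂gaussianVec d with hI
  calc |(secondMoment σ X - linearizedMoment b X) α α| = |(I - 1) - b ^ 2 * (S - 1)| := by
        simp only [secondMoment, linearizedMoment, Matrix.sub_apply, Matrix.add_apply,
          Matrix.smul_apply, Matrix.of_apply, Matrix.one_apply_eq, smul_eq_mul, ← sq, ← hI,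
          transpose_mul_self_apply, ← hS]
        ring_nf
    _ ≤ |I - 1| + b ^ 2 * |S - 1| := by
        exact (abs_sub _ _).trans_eq (by rw [abs_mul (b ^ 2), abs_of_nonneg (sq_nonneg b)])
    _ ≤ 2 * K * growthConst σ K * ε * cubicMoment + K ^ 2 * ε := by gcongr
    _ = diagConst σ K * ε := by unfold diagConst; ring

lemma abs_secondMoment_sub_linearizedMoment_offDiag_le (h : NormalizedActivation σ σ' K)
    (hX : NearOrthonormal ε X) (hε : ε ≤ 1 / 2) {α β : Fin n} (hαβ : α ≠ β) :
    |(secondMoment σ X - linearizedMoment (∫ g, σ' g ∂stdGaussian) X) α β| ≤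
      offDiagConst σ K * ε ^ 2 := by
  simpa [secondMoment, linearizedMoment, hαβ, transpose_mul_self_apply] using
    h.abs_integral_mul_dotProduct_sub_le (hX.abs_dotProduct_self_sub_one_le α)
      (hX.abs_dotProduct_self_sub_one_le β) (hX.abs_dotProduct_le hαβ) hε

/-- The constant in the linear bound on the entries of `Φ - Id`. -/
noncomputable def layerConst (σ : ℝ → ℝ) (K : ℝ≥0) : ℝ := diagConst σ K + offDiagConst σ K + K ^ 2

lemma abs_secondMoment_sub_one_le (h : NormalizedActivation σ σ' K) (hX : NearOrthonormal ε X)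
    (hε : ε ≤ 1 / 2) (α β : Fin n) :
    |secondMoment σ X α β - (1 : Matrix (Fin n) (Fin n) ℝ) α β| ≤ layerConst σ K * ε := by
  have hε0 : 0 ≤ ε := (abs_nonneg _).trans (hX α β)
  have hdiag := diagConst_nonneg (σ := σ) (K := K)
  have hoff := offDiagConst_nonneg (σ := σ) (K := K)
  set b := ∫ g, σ' g ∂stdGaussian
  have hdiff : |(secondMoment σ X - linearizedMoment b X) α β| ≤
      (diagConst σ K + offDiagConst σ K) * ε := by
    rcases eq_or_ne α β with rfl | hαβ
    · exact (h.abs_secondMoment_sub_linearizedMoment_diag_le hX (by linarith) α).trans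
        (by gcongr; linarith)
    · refine (h.abs_secondMoment_sub_linearizedMoment_offDiag_le hX hε hαβ).trans ?_
      have hsq : ε ^ 2 ≤ ε := by nlinarith
      gcongr
      linarith
  calc |secondMoment σ X α β - (1 : Matrix (Fin n) (Fin n) ℝ) α β|
      = |(secondMoment σ X - linearizedMoment b X) α β +
          b ^ 2 * ((Xᵀ * X) α β - (1 : Matrix (Fin n) (Fin n) ℝ) α β)| := by
        simp only [linearizedMoment, Matrix.sub_apply, Matrix.add_apply, Matrix.smul_apply,
          smul_eq_mul]
        ring_nf
    _ ≤ (diagConst σ K + offDiagConst σ K) * ε + K ^ 2 * ε := by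
        refine (abs_add_le _ _).trans (add_le_add hdiff ?_)
        rw [abs_mul, abs_of_nonneg (sq_nonneg b)]
        exact mul_le_mul h.integral_deriv_sq_le (hX α β) (abs_nonneg _) (sq_nonneg _)
    _ = layerConst σ K * ε := by unfold layerConst; ring

end NormalizedActivation

section Concentration

variable {E : Type*} [MeasurableSpace E] {ν : Measure E} {Y Z : E → ℝ} {s t M : ℝ}

lemma exp_le_one_add_add_sq_mul_exp_abs (x : ℝ) :
    Real.exp x ≤ 1 + x + x ^ 2 * Real.exp |x| := by
  have htaylor : Complex.exp x - ∑ m ∈ Finset.range 2, (x : ℂ) ^ m / (m.factorial : ℂ) =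
      ((Real.exp x - (1 + x) : ℝ) : ℂ) := by
    simp [Finset.sum_range_succ]
  have hnorm := Complex.norm_exp_sub_sum_le_norm_mul_exp (x : ℂ) 2
  rw [htaylor, Complex.norm_real, Complex.norm_real, Real.norm_eq_abs, Real.norm_eq_abs,
    sq_abs] at hnorm
  linarith [le_abs_self (Real.exp x - (1 + x))]

lemma exp_mul_le_one_add_add_exp_mul_abs (hs : 0 < s) (ht : |t| ≤ s / 2) (y : ℝ) :
    Real.exp (t * y) ≤ 1 + t * y + 8 / s ^ 2 * t ^ 2 * Real.exp (s * |y|) := by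
  set z := s / 2 * |y| with hz
  have hz0 : 0 ≤ z := by positivity
  have hty : |t * y| ≤ z := by
    rw [abs_mul]
    exact mul_le_mul_of_nonneg_right ht (abs_nonneg y)
  have hsq : (t * y) ^ 2 ≤ 8 / s ^ 2 * t ^ 2 * Real.exp z :=
    calc (t * y) ^ 2 = 8 / s ^ 2 * t ^ 2 * (z ^ 2 / 2) := by
          rw [hz, mul_pow, mul_pow, sq_abs]; field_simp; norm_num
      _ ≤ 8 / s ^ 2 * t ^ 2 * Real.exp z := by
          gcongr
          linarith [Real.quadratic_le_exp_of_nonneg hz0]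
  calc Real.exp (t * y) ≤ 1 + t * y + (t * y) ^ 2 * Real.exp |t * y| :=
        exp_le_one_add_add_sq_mul_exp_abs _
    _ ≤ 1 + t * y + 8 / s ^ 2 * t ^ 2 * Real.exp z * Real.exp z := by gcongr
    _ = 1 + t * y + 8 / s ^ 2 * t ^ 2 * Real.exp (s * |y|) := by
        rw [mul_assoc _ (Real.exp z), ← Real.exp_add, hz]; ring_nf

/-- The measurable function `Y` has exponential moment `E e^{s|Y|}` at most `M`. Integrability
is required separately since the integral of a non-integrable function is `0`. -/
structure ExpMomentLE (ν : Measure E) (s M : ℝ) (Y : E → ℝ) : Prop where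
  measurable : Measurable Y
  integrable : Integrable (fun e => Real.exp (s * |Y e|)) ν
  integral_le : ∫ e, Real.exp (s * |Y e|) ∂ν ≤ M

namespace ExpMomentLE

lemma mul (hY : ExpMomentLE ν s M (Y ^ 2)) (hZ : ExpMomentLE ν s M (Z ^ 2))
    (hYm : Measurable Y) (hZm : Measurable Z) (hs : 0 ≤ s) : ExpMomentLE ν s M (Y * Z) := by
  have hbound : ∀ e, Real.exp (s * |(Y * Z) e|) ≤
      (Real.exp (s * |(Y ^ 2) e|) + Real.exp (s * |(Z ^ 2) e|)) / 2 := fun e => by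
    have hamgm : |Y e * Z e| ≤ (Y e ^ 2 + Z e ^ 2) / 2 := by
      rw [abs_mul, ← sq_abs (Y e), ← sq_abs (Z e)]
      linarith [two_mul_le_add_sq |Y e| |Z e|]
    have hconvex := convexOn_exp.2 (Set.mem_univ (s * Y e ^ 2)) (Set.mem_univ (s * Z e ^ 2))
      one_half_pos.le one_half_pos.le (add_halves 1)
    simp only [smul_eq_mul] at hconvex
    simp only [Pi.mul_apply, Pi.pow_apply, abs_pow, sq_abs]
    calc Real.exp (s * |Y e * Z e|) ≤ Real.exp (s * ((Y e ^ 2 + Z e ^ 2) / 2)) := by gcongr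
      _ = Real.exp (1 / 2 * (s * Y e ^ 2) + 1 / 2 * (s * Z e ^ 2)) := by ring_nf
      _ ≤ _ := hconvex.trans_eq (by ring)
  have hint := (hY.integrable.add hZ.integrable).div_const 2
  have hYZ : Integrable (fun e => Real.exp (s * |(Y * Z) e|)) ν :=
    hint.mono' (by fun_prop) (.of_forall fun e => by
      rw [Real.norm_eq_abs, Real.abs_exp]; exact hbound e)
  refine ⟨hYm.mul hZm, hYZ, (integral_mono hYZ hint hbound).trans ?_⟩
  simp only [Pi.add_apply]
  rw [integral_div, integral_add hY.integrable hZ.integrable]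
  linarith [hY.integral_le, hZ.integral_le]

lemma neg (hY : ExpMomentLE ν s M Y) : ExpMomentLE ν s M (-Y) :=
  ⟨hY.measurable.neg, by simpa using hY.integrable, by simpa using hY.integral_le⟩

lemma integrable_of_pos (hY : ExpMomentLE ν s M Y) (hs : 0 < s) : Integrable Y ν := by
  refine (hY.integrable.const_mul s⁻¹).mono' hY.measurable.aestronglyMeasurable
    (.of_forall fun e => ?_)
  rw [Real.norm_eq_abs, le_inv_mul_iff₀ hs]
  linarith [Real.add_one_le_exp (s * |Y e|)]

lemma mul_abs_integral_le (hY : ExpMomentLE ν s M Y) (hs : 0 < s) :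
    s * |∫ e, Y e ∂ν| ≤ M :=
  calc s * |∫ e, Y e ∂ν| ≤ s * ∫ e, |Y e| ∂ν := by
        gcongr; exact abs_integral_le_integral_abs
    _ = ∫ e, s * |Y e| ∂ν := (integral_const_mul _ _).symm
    _ ≤ ∫ e, Real.exp (s * |Y e|) ∂ν :=
        integral_mono ((hY.integrable_of_pos hs).abs.const_mul s) hY.integrable fun e => by
          linarith [Real.add_one_le_exp (s * |Y e|)]
    _ ≤ M := hY.integral_le

lemma sub_integral (hY : ExpMomentLE ν s M Y) (hs : 0 < s) :
    ExpMomentLE ν s (Real.exp M * M) (fun e => Y e - ∫ e, Y e ∂ν) := by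
  have hm := hY.measurable
  have hbound : ∀ e, Real.exp (s * |Y e - ∫ e, Y e ∂ν|) ≤ Real.exp M * Real.exp (s * |Y e|) :=
    fun e => by
      rw [← Real.exp_add, Real.exp_le_exp]
      have := mul_le_mul_of_nonneg_left (abs_sub (Y e) (∫ e, Y e ∂ν)) hs.le
      linarith [hY.mul_abs_integral_le hs]
  have hint : Integrable (fun e => Real.exp (s * |Y e - ∫ e, Y e ∂ν|)) ν :=
    (hY.integrable.const_mul _).mono' (by fun_prop) (.of_forall fun e => by
      rw [Real.norm_eq_abs, Real.abs_exp]; exact hbound e)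
  refine ⟨by fun_prop, hint, (integral_mono hint (hY.integrable.const_mul _) hbound).trans ?_⟩
  rw [integral_const_mul]
  gcongr
  exact hY.integral_le

lemma integrable_exp_mul (hY : ExpMomentLE ν s M Y) (ht : |t| ≤ s) :
    Integrable (fun e => Real.exp (t * Y e)) ν := by
  have hm := hY.measurable
  refine hY.integrable.mono' (by fun_prop) (.of_forall fun e => ?_)
  rw [Real.norm_eq_abs, Real.abs_exp, Real.exp_le_exp]
  calc t * Y e ≤ |t| * |Y e| := (le_abs_self _).trans_eq (abs_mul _ _)
    _ ≤ s * |Y e| := by gcongr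

lemma mgf_le [IsProbabilityMeasure ν] (hY : ExpMomentLE ν s M Y) (hs : 0 < s)
    (hmean : ∫ e, Y e ∂ν = 0) (ht : |t| ≤ s / 2) :
    mgf Y ν t ≤ Real.exp (8 / s ^ 2 * M * t ^ 2) := by
  have hlinear : Integrable (fun e => 1 + t * Y e) ν :=
    (integrable_const 1).add ((hY.integrable_of_pos hs).const_mul t)
  have hexp := hY.integrable.const_mul (8 / s ^ 2 * t ^ 2)
  calc mgf Y ν t
      ≤ ∫ e, (1 + t * Y e + 8 / s ^ 2 * t ^ 2 * Real.exp (s * |Y e|)) ∂ν :=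
        integral_mono (hY.integrable_exp_mul (by linarith)) (hlinear.add hexp) fun e =>
          exp_mul_le_one_add_add_exp_mul_abs hs ht (Y e)
    _ = 1 + 8 / s ^ 2 * t ^ 2 * ∫ e, Real.exp (s * |Y e|) ∂ν := by
        rw [integral_add hlinear hexp,
          integral_add (integrable_const 1) ((hY.integrable_of_pos hs).const_mul t),
          integral_const_mul, integral_const_mul, hmean]
        simp
    _ ≤ 8 / s ^ 2 * M * t ^ 2 + 1 := by
        rw [add_comm, mul_right_comm]
        gcongr
        exact hY.integral_le
    _ ≤ Real.exp (8 / s ^ 2 * M * t ^ 2) := Real.add_one_le_exp _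

variable [IsProbabilityMeasure ν] {d : ℕ}

lemma mgf_sum_le (hY : ExpMomentLE ν s M Y) (hs : 0 < s) (hmean : ∫ e, Y e ∂ν = 0)
    (hd : (√d)⁻¹ ≤ s / 2) :
    mgf (fun w : Fin d → E => ∑ i, Y (w i)) (Measure.pi fun _ => ν) (√d)⁻¹ ≤
      Real.exp (8 / s ^ 2 * M) := by
  have hM : 0 ≤ M := (integral_nonneg fun _ => (Real.exp_pos _).le).trans hY.integral_le
  have hmgf := hY.mgf_le hs hmean (t := (√d)⁻¹) (by rwa [abs_of_nonneg (by positivity)])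
  calc mgf (fun w : Fin d → E => ∑ i, Y (w i)) (Measure.pi fun _ => ν) (√d)⁻¹
      = mgf Y ν (√d)⁻¹ ^ d := by
        simp only [mgf, Finset.mul_sum, Real.exp_sum]
        rw [integral_fintype_prod_eq_prod fun _ e => Real.exp ((√d)⁻¹ * Y e)]
        simp
    _ ≤ Real.exp (8 / s ^ 2 * M * (√d)⁻¹ ^ 2) ^ d := by
        gcongr
        exact mgf_nonneg
    _ = Real.exp (8 / s ^ 2 * M * (d * (d : ℝ)⁻¹)) := by
        rw [← Real.exp_nat_mul, inv_pow, Real.sq_sqrt (by positivity)]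
        ring_nf
    _ ≤ Real.exp (8 / s ^ 2 * M) := by
        rw [Real.exp_le_exp]
        exact mul_le_of_le_one_right (by positivity) mul_inv_le_one

lemma measureReal_le_sum_le (hY : ExpMomentLE ν s M Y) (hs : 0 < s) (hmean : ∫ e, Y e ∂ν = 0)
    (hd : (√d)⁻¹ ≤ s / 2) (hd0 : 0 < d) (u : ℝ) :
    (Measure.pi fun _ : Fin d => ν).real {w | u * √d ≤ ∑ i, Y (w i)} ≤
      Real.exp (8 / s ^ 2 * M) * Real.exp (-u) := by
  have hint : Integrable (fun w : Fin d → E => Real.exp ((√d)⁻¹ * ∑ i, Y (w i)))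
      (Measure.pi fun _ => ν) := by
    simp only [Finset.mul_sum, Real.exp_sum]
    exact Integrable.fintype_prod (f := fun _ e => Real.exp ((√d)⁻¹ * Y e)) fun _ =>
      hY.integrable_exp_mul (by rw [abs_of_pos (by positivity)]; linarith)
  calc _ ≤ Real.exp (-(√d)⁻¹ * (u * √d)) *
        mgf (fun w : Fin d → E => ∑ i, Y (w i)) (Measure.pi fun _ => ν) (√d)⁻¹ :=
        measure_ge_le_exp_mul_mgf _ (by positivity) hint
    _ ≤ Real.exp (-u) * Real.exp (8 / s ^ 2 * M) := by
        rw [show -(√(d : ℝ))⁻¹ * (u * √d) = -u by field_simp]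
        gcongr
        exact hY.mgf_sum_le hs hmean hd
    _ = Real.exp (8 / s ^ 2 * M) * Real.exp (-u) := mul_comm _ _

lemma measure_le_abs_sum_le (hY : ExpMomentLE ν s M Y) (hs : 0 < s) (hmean : ∫ e, Y e ∂ν = 0)
    (hd : (√d)⁻¹ ≤ s / 2) (hd0 : 0 < d) (u : ℝ) :
    (Measure.pi fun _ : Fin d => ν) {w | u * √d ≤ |∑ i, Y (w i)|} ≤
      ENNReal.ofReal (2 * Real.exp (8 / s ^ 2 * M) * Real.exp (-u)) := by
  have hupper := hY.measureReal_le_sum_le hs hmean hd hd0 u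
  have hlower := hY.neg.measureReal_le_sum_le hs
    (by simp only [Pi.neg_apply]; rw [integral_neg, hmean, neg_zero]) hd hd0 u
  simp only [Pi.neg_apply, Finset.sum_neg_distrib] at hlower
  rw [← ofReal_measureReal]
  refine ENNReal.ofReal_le_ofReal ?_
  simp only [le_abs]
  refine (measureReal_union_le {w : Fin d → E | u * √d ≤ ∑ i, Y (w i)}
    {w | u * √d ≤ -∑ i, Y (w i)}).trans ?_
  linarith

end ExpMomentLE

end Concentration

section GaussianProjections

variable {f : ℝ → ℝ} {K : ℝ≥0}

lemma expMomentLE_map_iff {E F : Type*} [MeasurableSpace E] [MeasurableSpace F] {ν : Measure E}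
    {φ : E → F} {Y : F → ℝ} {s M : ℝ} (hφ : Measurable φ) (hY : Measurable Y) :
    ExpMomentLE (ν.map φ) s M Y ↔ ExpMomentLE ν s M (Y ∘ φ) := by
  have hmeas : AEStronglyMeasurable (fun e => Real.exp (s * |Y e|)) (ν.map φ) := by fun_prop
  exact ⟨fun h => ⟨hY.comp hφ, (integrable_map_measure hmeas hφ.aemeasurable).1 h.integrable,
      (integral_map hφ.aemeasurable hmeas).symm.trans_le h.integral_le⟩,
    fun h => ⟨hY, (integrable_map_measure hmeas hφ.aemeasurable).2 h.integrable,
      (integral_map hφ.aemeasurable hmeas).trans_le h.integral_le⟩⟩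

lemma exists_expMomentLE_sq_comp_mul (hf : LipschitzWith K f) :
    ∃ s M : ℝ, 0 < s ∧ ∀ a : ℝ, |a| ≤ 2 →
      ExpMomentLE stdGaussian s M (fun g => f (a * g) ^ 2) := by
  obtain ⟨c, hc, hfernique⟩ := IsGaussian.exists_integrable_exp_sq stdGaussian
  have hcont := hf.continuous
  set A := growthConst f K
  set s := c / (2 * (A ^ 2 + 1)) with hs_def
  have hs : 0 < s := by positivity
  have hsA : s * (2 * A ^ 2) ≤ c := by
    rw [hs_def, div_mul_eq_mul_div, div_le_iff₀ (by positivity)]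
    linarith
  have hbound : ∀ a : ℝ, |a| ≤ 2 → ∀ g : ℝ,
      Real.exp (s * |f (a * g) ^ 2|) ≤ Real.exp c * Real.exp (c * ‖g‖ ^ 2) := fun a ha g => by
    rw [← Real.exp_add, Real.exp_le_exp, Real.norm_eq_abs, abs_pow]
    calc s * |f (a * g)| ^ 2 ≤ s * (A * (1 + |g|)) ^ 2 := by
          gcongr
          exact abs_comp_mul_le hf ha g
      _ ≤ s * (2 * A ^ 2 * (1 + |g| ^ 2)) := by
          gcongr
          nlinarith [mul_nonneg (sq_nonneg A) (sq_nonneg (1 - |g|))]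
      _ = s * (2 * A ^ 2) * (1 + |g| ^ 2) := by ring
      _ ≤ c * (1 + |g| ^ 2) := by gcongr
      _ = c + c * |g| ^ 2 := by ring
  have hdom := hfernique.const_mul (Real.exp c)
  refine ⟨s, ∫ g, Real.exp c * Real.exp (c * ‖g‖ ^ 2) ∂stdGaussian, hs, fun a ha => ?_⟩
  have hint : Integrable (fun g => Real.exp (s * |f (a * g) ^ 2|)) stdGaussian :=
    hdom.mono' (by fun_prop) (.of_forall fun g => by
      rw [Real.norm_eq_abs, Real.abs_exp]; exact hbound a ha g)
  exact ⟨by fun_prop, hint, integral_mono hint hdom (hbound a ha)⟩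

lemma exists_expMomentLE_sq_dotProduct (hf : LipschitzWith K f) :
    ∃ s M : ℝ, 0 < s ∧ ∀ {m : ℕ} {x : Fin m → ℝ}, |x ⬝ᵥ x - 1| ≤ 1 →
      ExpMomentLE (gaussianVec m) s M (fun w => f (w ⬝ᵥ x) ^ 2) := by
  obtain ⟨s, M, hs, hscalar⟩ := exists_expMomentLE_sq_comp_mul hf
  have hcont := hf.continuous
  have hsq : Measurable fun z => f z ^ 2 := by fun_prop
  refine ⟨s, M, hs, fun {m x} hx => ?_⟩
  have hxx : 0 ≤ x ⬝ᵥ x := dotProduct_star_self_nonneg x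
  have hnorm : |√(x ⬝ᵥ x)| ≤ 2 := by
    rw [abs_of_nonneg (Real.sqrt_nonneg _)]
    linarith [(abs_le.1 ((abs_sqrt_sub_one_le hxx).trans hx)).2]
  have hlaw := (expMomentLE_map_iff (measurable_const_mul _) hsq).2 (hscalar _ hnorm)
  rw [← map_dotProduct_gaussianVec_eq_map_mul (Real.sq_sqrt hxx).symm] at hlaw
  exact (expMomentLE_map_iff (by fun_prop) hsq).1 hlaw

lemma exists_gaussianMat_le_abs_sum_sub_integral_le (hf : LipschitzWith K f) :
    ∃ s C : ℝ, 0 < s ∧ ∀ {m : ℕ} {x y : Fin m → ℝ}, |x ⬝ᵥ x - 1| ≤ 1 → |y ⬝ᵥ y - 1| ≤ 1 →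
      ∀ {d : ℕ}, 0 < d → (√d)⁻¹ ≤ s → ∀ u : ℝ,
        gaussianMat d m {W | u * √d ≤ |∑ k, (f (W k ⬝ᵥ x) * f (W k ⬝ᵥ y) -
          ∫ w, f (w ⬝ᵥ x) * f (w ⬝ᵥ y) ∂gaussianVec m)|} ≤
        ENNReal.ofReal (C * Real.exp (-u)) := by
  obtain ⟨s, M, hs, hmoment⟩ := exists_expMomentLE_sq_dotProduct hf
  have hcont := hf.continuous
  refine ⟨s / 2, 2 * Real.exp (8 / s ^ 2 * (Real.exp M * M)), by positivity,
    fun {m x y} hx hy d hd hds u => ?_⟩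
  have hprod : ExpMomentLE (gaussianVec m) s M (fun w => f (w ⬝ᵥ x) * f (w ⬝ᵥ y)) :=
    (hmoment hx).mul (hmoment hy) (by fun_prop) (by fun_prop) hs.le
  refine (hprod.sub_integral hs).measure_le_abs_sum_le hs ?_ hds hd u
  rw [integral_sub (hprod.integrable_of_pos hs) (integrable_const _)]
  simp

end GaussianProjections

section Layer

variable {d m n : ℕ} {σ : ℝ → ℝ}

/-- A single network layer `X ↦ σ(WX)/√d`. -/
noncomputable def layer (σ : ℝ → ℝ) (W : Fin d → Fin m → ℝ) (X : Matrix (Fin m) (Fin n) ℝ) :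
    Matrix (Fin d) (Fin n) ℝ :=
  (√d)⁻¹ • (Matrix.of W * X).map σ

lemma netLayer_succ (σ : ℝ → ℝ) (d : ℕ → ℕ) (n : ℕ)
    (W : (ℓ : ℕ) → Fin (d (ℓ + 1)) → Fin (d ℓ) → ℝ) (X0 : Matrix (Fin (d 0)) (Fin n) ℝ) (ℓ : ℕ) :
    netLayer σ d n W X0 (ℓ + 1) = layer σ (W ℓ) (netLayer σ d n W X0 ℓ) := rfl

lemma transpose_layer_mul_layer_apply (W : Fin d → Fin m → ℝ) (X : Matrix (Fin m) (Fin n) ℝ)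
    (α β : Fin n) :
    ((layer σ W X)ᵀ * layer σ W X) α β =
      (d : ℝ)⁻¹ * ∑ k, σ (W k ⬝ᵥ X.col α) * σ (W k ⬝ᵥ X.col β) := by
  have hinv : (d : ℝ)⁻¹ = (√d)⁻¹ * (√d)⁻¹ := by
    rw [← mul_inv, Real.mul_self_sqrt (Nat.cast_nonneg d)]
  rw [Matrix.mul_apply, Finset.mul_sum]
  refine Finset.sum_congr rfl fun k _ => ?_
  rw [hinv, mul_mul_mul_comm]
  rfl

lemma nearOrthonormal_layer_of_abs_sum_le {W : Fin d → Fin m → ℝ} {X : Matrix (Fin m) (Fin n) ℝ}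
    {δ u : ℝ} (hd : 0 < d)
    (hΦ : ∀ α β, |secondMoment σ X α β - (1 : Matrix (Fin n) (Fin n) ℝ) α β| ≤ δ)
    (hsum : ∀ α β, |∑ k, (σ (W k ⬝ᵥ X.col α) * σ (W k ⬝ᵥ X.col β) - secondMoment σ X α β)| ≤
      u * √d) :
    NearOrthonormal (δ + u / √d) (layer σ W X) := fun α β => by
  have hdev : ((layer σ W X)ᵀ * layer σ W X) α β - secondMoment σ X α β =
      (d : ℝ)⁻¹ * ∑ k, (σ (W k ⬝ᵥ X.col α) * σ (W k ⬝ᵥ X.col β) - secondMoment σ X α β) := by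
    rw [transpose_layer_mul_layer_apply, Finset.sum_sub_distrib]
    simp only [Finset.sum_const, Finset.card_univ, Fintype.card_fin, nsmul_eq_mul]
    field_simp
  calc _ = |(((layer σ W X)ᵀ * layer σ W X) α β - secondMoment σ X α β) +
          (secondMoment σ X α β - (1 : Matrix (Fin n) (Fin n) ℝ) α β)| := by ring_nf
    _ ≤ (d : ℝ)⁻¹ * (u * √d) + δ := by
        refine (abs_add_le _ _).trans (add_le_add ?_ (hΦ α β))
        rw [hdev, abs_mul, abs_of_nonneg (by positivity)]
        gcongr
        exact hsum α β
    _ = δ + u / √d := by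
        rw [add_comm, inv_mul_eq_div, mul_div_assoc, Real.sqrt_div_self', mul_one_div]

lemma NormalizedActivation.exists_gaussianMat_not_nearOrthonormal_layer_le {σ' : ℝ → ℝ} {K : ℝ≥0}
    (h : NormalizedActivation σ σ' K) :
    ∃ s C : ℝ, 0 < s ∧ ∀ {m n d : ℕ} {X : Matrix (Fin m) (Fin n) ℝ} {ε : ℝ},
      NearOrthonormal ε X → ε ≤ 1 / 2 → 0 < d → (√d)⁻¹ ≤ s → ∀ u : ℝ,
        gaussianMat d m {W | ¬ NearOrthonormal (layerConst σ K * ε + u / √d) (layer σ W X)} ≤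
          (n ^ 2 : ℕ) * ENNReal.ofReal (C * Real.exp (-u)) := by
  obtain ⟨s, C, hs, hconc⟩ := exists_gaussianMat_le_abs_sum_sub_integral_le h.lipschitz
  refine ⟨s, C, hs, fun {m n d X ε} hX hε hd hds u => ?_⟩
  set T : Fin n × Fin n → Set (Fin d → Fin m → ℝ) := fun p => {W | u * √d ≤
    |∑ k, (σ (W k ⬝ᵥ X.col p.1) * σ (W k ⬝ᵥ X.col p.2) - secondMoment σ X p.1 p.2)|} with hT
  have hcover : {W | ¬ NearOrthonormal (layerConst σ K * ε + u / √d) (layer σ W X)} ⊆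
      ⋃ p, T p := fun W hW => by
    contrapose! hW
    simp only [hT, Set.mem_iUnion, Set.mem_ofPred_eq, not_exists, not_le, Prod.forall] at hW
    exact not_not.2 (nearOrthonormal_layer_of_abs_sum_le hd (h.abs_secondMoment_sub_one_le hX hε)
      fun α β => (hW α β).le)
  have hnorm : ∀ α, |X.col α ⬝ᵥ X.col α - 1| ≤ 1 := fun α =>
    (hX.abs_dotProduct_self_sub_one_le α).trans (by linarith)
  calc _ ≤ gaussianMat d m (⋃ p, T p) := measure_mono hcover
    _ ≤ ∑ p, gaussianMat d m (T p) := measure_iUnion_fintype_le _ _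
    _ ≤ ∑ _p : Fin n × Fin n, ENNReal.ofReal (C * Real.exp (-u)) :=
        Finset.sum_le_sum fun p _ => hconc (hnorm p.1) (hnorm p.2) hd hds u
    _ = (n ^ 2 : ℕ) * ENNReal.ofReal (C * Real.exp (-u)) := by simp [sq]

end Layer

section ConditionalStep

lemma pi_le_of_forall_update_le {ι : Type*} [Fintype ι] [DecidableEq ι] {E : ι → Type*}
    [∀ i, MeasurableSpace (E i)] (μ : ∀ i, Measure (E i)) [∀ i, IsProbabilityMeasure (μ i)]
    {S : Set (∀ i, E i)} (hS : MeasurableSet S) (i : ι) {δ : ℝ≥0∞}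
    (hslice : ∀ x, μ i {y | Function.update x i y ∈ S} ≤ δ) : Measure.pi μ S ≤ δ := by
  let x₀ : ∀ i, E i := fun i => (nonempty_of_isProbabilityMeasure (μ i)).some
  calc Measure.pi μ S = (∫⋯∫⁻_Finset.univ, S.indicator 1 ∂μ) x₀ := by
        rw [← lintegral_indicator_one hS, lintegral_eq_lmarginal_univ x₀]
    _ = (∫⋯∫⁻_Finset.univ.erase i, fun x => ∫⁻ y, S.indicator 1 (Function.update x i y) ∂μ i ∂μ)
          x₀ := by
        rw [lmarginal_erase' _ (measurable_one.indicator hS) (Finset.mem_univ i)]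
    _ ≤ (∫⋯∫⁻_Finset.univ.erase i, fun _ => δ ∂μ) x₀ := by
        refine lmarginal_mono (fun x => ?_) x₀
        exact (lintegral_indicator_one (measurable_update x hS)).trans_le (hslice x)
    _ = δ := by simp [lmarginal]

variable {σ : ℝ → ℝ} {d : ℕ → ℕ} {n L : ℕ}

/-- The product `σ`-algebra on matrices, i.e. that of the matrix entries. -/
local instance matrixMeasurableSpace {m n : ℕ} : MeasurableSpace (Matrix (Fin m) (Fin n) ℝ) :=
  inferInstanceAs (MeasurableSpace (Fin m → Fin n → ℝ))

lemma measurable_matrix_entry {m n : ℕ} (i : Fin m) (α : Fin n) :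
    Measurable fun X : Matrix (Fin m) (Fin n) ℝ => X i α :=
  (measurable_pi_apply α).comp (measurable_pi_apply i)

lemma measurableSet_nearOrthonormal {m n : ℕ} (ε : ℝ) :
    MeasurableSet {X : Matrix (Fin m) (Fin n) ℝ | NearOrthonormal ε X} := by
  simp only [NearOrthonormal, transpose_mul_self_apply, Set.ofPred_forall]
  refine MeasurableSet.iInter fun α => MeasurableSet.iInter fun β => ?_
  have hgram : Measurable fun X : Matrix (Fin m) (Fin n) ℝ => X.col α ⬝ᵥ X.col β :=
    Finset.measurable_sum _ fun i _ =>
      (measurable_matrix_entry i α).mul (measurable_matrix_entry i β)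
  exact measurableSet_le (hgram.sub_const _).abs measurable_const

/-- Extension of the weights of the first `L` layers by zero. -/
def extendWeights (V : (ℓ : Fin L) → Fin (d (ℓ + 1)) → Fin (d ℓ) → ℝ) (ℓ : ℕ) :
    Fin (d (ℓ + 1)) → Fin (d ℓ) → ℝ :=
  if h : ℓ < L then V ⟨ℓ, h⟩ else 0

lemma measurable_extendWeights (ℓ : ℕ) :
    Measurable fun V : (ℓ : Fin L) → Fin (d (ℓ + 1)) → Fin (d ℓ) → ℝ => extendWeights V ℓ := by
  unfold extendWeights
  split_ifs
  · exact measurable_pi_apply _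
  · exact measurable_const

lemma netLayer_congr {W W' : (ℓ : ℕ) → Fin (d (ℓ + 1)) → Fin (d ℓ) → ℝ}
    (X0 : Matrix (Fin (d 0)) (Fin n) ℝ) {ℓ : ℕ} (hW : ∀ m < ℓ, W m = W' m) :
    netLayer σ d n W X0 ℓ = netLayer σ d n W' X0 ℓ := by
  induction ℓ with
  | zero => rfl
  | succ ℓ ih =>
    rw [netLayer_succ, netLayer_succ, ih fun m hm => hW m (hm.trans ℓ.lt_succ_self),
      hW ℓ ℓ.lt_succ_self]

lemma netLayer_extendWeights (W : (ℓ : ℕ) → Fin (d (ℓ + 1)) → Fin (d ℓ) → ℝ)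
    (X0 : Matrix (Fin (d 0)) (Fin n) ℝ) {ℓ : ℕ} (hℓ : ℓ ≤ L) :
    netLayer σ d n (extendWeights fun m : Fin L => W m) X0 ℓ = netLayer σ d n W X0 ℓ :=
  netLayer_congr X0 fun m hm => by simp [extendWeights, hm.trans_le hℓ]

lemma netLayer_extendWeights_update (V : (ℓ : Fin L) → Fin (d (ℓ + 1)) → Fin (d ℓ) → ℝ)
    (X0 : Matrix (Fin (d 0)) (Fin n) ℝ) (ℓ : Fin L) (w : Fin (d (ℓ + 1)) → Fin (d ℓ) → ℝ) :
    netLayer σ d n (extendWeights (Function.update V ℓ w)) X0 ℓ =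
      netLayer σ d n (extendWeights V) X0 ℓ :=
  netLayer_congr X0 fun m hm => by
    have hne : (⟨m, hm.trans ℓ.isLt⟩ : Fin L) ≠ ℓ := Fin.ne_of_lt hm
    simp [extendWeights, hm.trans ℓ.isLt, Function.update_of_ne hne]

lemma netLayer_extendWeights_update_succ (V : (ℓ : Fin L) → Fin (d (ℓ + 1)) → Fin (d ℓ) → ℝ)
    (X0 : Matrix (Fin (d 0)) (Fin n) ℝ) (ℓ : Fin L) (w : Fin (d (ℓ + 1)) → Fin (d ℓ) → ℝ) :
    netLayer σ d n (extendWeights (Function.update V ℓ w)) X0 (ℓ + 1) =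
      layer σ w (netLayer σ d n (extendWeights V) X0 ℓ) := by
  rw [netLayer_succ, netLayer_extendWeights_update]
  simp [extendWeights]

lemma measurable_layer {V : Type*} [MeasurableSpace V] {d m n : ℕ} (hσ : Measurable σ)
    {W : V → Fin d → Fin m → ℝ} (hW : Measurable W) {X : V → Matrix (Fin m) (Fin n) ℝ}
    (hX : Measurable X) : Measurable fun v => layer σ (W v) (X v) := by
  refine measurable_pi_lambda _ fun k => measurable_pi_lambda _ fun α => ?_
  have hdot : Measurable fun v => ∑ i, W v k i * X v i α :=
    Finset.measurable_sum _ fun i _ => ((measurable_matrix_entry k i).comp hW).mul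
      ((measurable_matrix_entry i α).comp hX)
  exact (hσ.comp hdot).const_mul (√d)⁻¹

lemma measurable_netLayer_extendWeights (hσ : Measurable σ) (X0 : Matrix (Fin (d 0)) (Fin n) ℝ)
    (ℓ : ℕ) :
    Measurable fun V : (ℓ : Fin L) → Fin (d (ℓ + 1)) → Fin (d ℓ) → ℝ =>
      netLayer σ d n (extendWeights V) X0 ℓ := by
  induction ℓ with
  | zero => exact measurable_const
  | succ ℓ ih =>
    simp only [netLayer_succ]
    exact measurable_layer hσ (measurable_extendWeights ℓ) ih

variable {Ω : Type*} [MeasurableSpace Ω] {Pr : Measure Ω}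
  {W : (ℓ : ℕ) → Ω → Fin (d (ℓ + 1)) → Fin (d ℓ) → ℝ}

/-- The weights of the first `L` layers are independent with independent standard Gaussian
entries. -/
def IsGaussianWeights (L : ℕ) (d : ℕ → ℕ) (Pr : Measure Ω)
    (W : (ℓ : ℕ) → Ω → Fin (d (ℓ + 1)) → Fin (d ℓ) → ℝ) : Prop :=
  Pr.map (fun ω => fun ℓ : Fin L => W ℓ ω) =
    Measure.pi fun ℓ : Fin L => gaussianMat (d (ℓ + 1)) (d ℓ)

/-- The layer `X_ℓ` depends on the weights of the earlier layers only, so the randomness of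
`X_{ℓ+1}` given `X_ℓ` is that of a single Gaussian weight matrix. -/
lemma IsGaussianWeights.measure_netLayer_mem_and_succ_notMem_le
    (hW : IsGaussianWeights L d Pr W) (hσ : Measurable σ) (X0 : Matrix (Fin (d 0)) (Fin n) ℝ)
    {ℓ : ℕ} (hℓ : ℓ < L) {S : Set (Matrix (Fin (d ℓ)) (Fin n) ℝ)} (hS : MeasurableSet S)
    {T : Set (Matrix (Fin (d (ℓ + 1))) (Fin n) ℝ)} (hT : MeasurableSet T) {δ : ℝ≥0∞}
    (hstep : ∀ X ∈ S, gaussianMat (d (ℓ + 1)) (d ℓ) {w | layer σ w X ∉ T} ≤ δ) :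
    Pr {ω | netLayer σ d n (fun m => W m ω) X0 ℓ ∈ S ∧
      netLayer σ d n (fun m => W m ω) X0 (ℓ + 1) ∉ T} ≤ δ := by
  have hmeas : AEMeasurable (fun ω => fun ℓ : Fin L => W ℓ ω) Pr :=
    aemeasurable_of_map_neZero ⟨by rw [hW]; exact IsProbabilityMeasure.ne_zero _⟩
  have hevent : MeasurableSet {V : (ℓ : Fin L) → Fin (d (ℓ + 1)) → Fin (d ℓ) → ℝ |
      netLayer σ d n (extendWeights V) X0 ℓ ∈ S ∧
        netLayer σ d n (extendWeights V) X0 (ℓ + 1) ∉ T} :=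
    (measurable_netLayer_extendWeights hσ X0 ℓ hS).inter
      (measurable_netLayer_extendWeights hσ X0 (ℓ + 1) hT).compl
  simp only [← netLayer_extendWeights (fun m => W m _) X0 hℓ.le,
    ← netLayer_extendWeights (fun m => W m _) X0 (Nat.succ_le_of_lt hℓ)]
  refine (Measure.map_apply_of_aemeasurable hmeas hevent).symm.trans_le ?_
  rw [hW]
  refine pi_le_of_forall_update_le _ hevent ⟨ℓ, hℓ⟩ fun V => ?_
  simp only [Set.mem_ofPred_eq, netLayer_extendWeights_update V X0 ⟨ℓ, hℓ⟩,
    netLayer_extendWeights_update_succ V X0 ⟨ℓ, hℓ⟩]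
  by_cases hV : netLayer σ d n (extendWeights V) X0 ℓ ∈ S
  · simpa only [hV, true_and] using hstep _ hV
  · simp [hV]

end ConditionalStep

section Rates

lemma ae_eventually_notMem_of_eventually_le {Ω : Type*} [MeasurableSpace Ω] {μ : Measure Ω}
    {s : ℕ → Set Ω} {b : ℕ → ℝ≥0∞} (hs : ∀ᶠ n in atTop, μ (s n) ≤ b n) (hb : ∑' n, b n ≠ ⊤) :
    ∀ᵐ ω ∂μ, ∀ᶠ n in atTop, ω ∉ s n := by
  have hle : ∀ n, μ {ω | μ (s n) ≤ b n ∧ ω ∈ s n} ≤ b n := fun n => by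
    by_cases hn : μ (s n) ≤ b n <;> simp [hn]
  filter_upwards [ae_eventually_notMem (ne_top_of_le_ne_top hb (ENNReal.tsum_le_tsum hle))]
    with ω hω
  filter_upwards [hω, hs] with n hn hsn hmem using hn ⟨hsn, hmem⟩

lemma tsum_natCast_sq_mul_ofReal_exp_neg_log_ne_top (C : ℝ) :
    ∑' n : ℕ, ((n ^ 2 : ℕ) : ℝ≥0∞) * ENNReal.ofReal (C * Real.exp (-(4 * Real.log n))) ≠ ⊤ := by
  have hsum : Summable fun n : ℕ => C * ((n : ℝ) ^ 2)⁻¹ :=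
    (Real.summable_nat_pow_inv.2 one_lt_two).mul_left C
  refine ne_top_of_le_ne_top hsum.tsum_ofReal_ne_top (ENNReal.tsum_le_tsum fun n => ?_)
  rcases n.eq_zero_or_pos with rfl | hn
  · simp
  have hn' : (0 : ℝ) < n := Nat.cast_pos.2 hn
  have hexp : Real.exp (-(4 * Real.log n)) = ((n : ℝ) ^ 4)⁻¹ := by
    rw [Real.exp_neg, ← Nat.cast_ofNat, Real.exp_nat_mul, Real.exp_log hn']
  rw [hexp, ← ENNReal.ofReal_natCast, ← ENNReal.ofReal_mul (Nat.cast_nonneg _)]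
  refine ENNReal.ofReal_le_ofReal (le_of_eq ?_)
  push_cast
  field_simp

lemma tendsto_zero_of_tendsto_mul_rpow_zero {e : ℕ → ℝ} {r : ℝ} (hr : 0 ≤ r)
    (he : Tendsto (fun n : ℕ => e n * (n : ℝ) ^ r) atTop (𝓝 0)) : Tendsto e atTop (𝓝 0) := by
  refine squeeze_zero_norm' ?_ (tendsto_zero_iff_norm_tendsto_zero.1 he)
  filter_upwards [eventually_ge_atTop 1] with n hn
  have hone : 1 ≤ (n : ℝ) ^ r := Real.one_le_rpow (Nat.one_le_cast.2 hn) hr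
  rw [norm_mul]
  exact le_mul_of_one_le_right (norm_nonneg _) (hone.trans (le_abs_self _))

lemma tendsto_sqrt_atTop_of_rpow_mul_log_isLittleO {d : ℕ → ℕ}
    (hd : (fun n : ℕ => (n : ℝ) ^ ((1 : ℝ) / 4) * Real.log n) =o[atTop] fun n => √(d n)) :
    Tendsto (fun n => √(d n)) atTop atTop := by
  have hrpow : Tendsto (fun n : ℕ => (n : ℝ) ^ ((1 : ℝ) / 4)) atTop atTop :=
    (tendsto_rpow_atTop (by norm_num)).comp tendsto_natCast_atTop_atTop
  have hlog : Tendsto (fun n : ℕ => Real.log n) atTop atTop :=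
    Real.tendsto_log_atTop.comp tendsto_natCast_atTop_atTop
  refine tendsto_atTop_mono' atTop ?_ (hrpow.atTop_mul_atTop₀ hlog)
  filter_upwards [hd.bound one_pos] with n hn
  rw [one_mul, Real.norm_of_nonneg (Real.sqrt_nonneg _)] at hn
  exact (le_abs_self _).trans hn

lemma rpow_mul_log_isLittleO_sqrt_of_tendsto_div {d : ℕ → ℕ} {γ : ℝ} (hγ : 0 < γ)
    (hd : Tendsto (fun n : ℕ => (n : ℝ) / (d n : ℝ)) atTop (𝓝 γ)) :
    (fun n : ℕ => (n : ℝ) ^ ((1 : ℝ) / 4) * Real.log n) =o[atTop] fun n => √(d n) := by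
  have hlog : (fun n : ℕ => Real.log n) =o[atTop] fun n : ℕ => (n : ℝ) ^ ((1 : ℝ) / 4) :=
    (isLittleO_log_rpow_atTop (by norm_num)).comp_tendsto tendsto_natCast_atTop_atTop
  have hsqrt : (fun n : ℕ => √(n : ℝ)) =O[atTop] fun n => √(d n) := by
    refine Asymptotics.isBigO_of_div_tendsto_nhds ?_ (√γ) ?_
    · filter_upwards [hd.eventually_const_lt hγ] with n hn hzero
      simp [Real.sqrt_eq_zero (Nat.cast_nonneg _) |>.1 hzero] at hn
    · exact (hd.sqrt).congr fun n => Real.sqrt_div (Nat.cast_nonneg _) _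
  refine (((Asymptotics.isBigO_refl _ _).mul_isLittleO hlog).congr_right fun n => ?_).trans_isBigO
    hsqrt
  rw [← Real.rpow_add_of_nonneg (Nat.cast_nonneg n) (by norm_num) (by norm_num),
    Real.sqrt_eq_rpow]
  norm_num

end Rates

section Frobenius

variable {n : ℕ} {M : Matrix (Fin n) (Fin n) ℝ}

lemma frobSq_nonneg {m n : ℕ} (M : Matrix (Fin m) (Fin n) ℝ) : 0 ≤ frobSq M :=
  Finset.sum_nonneg fun _ _ => Finset.sum_nonneg fun _ _ => sq_nonneg _

lemma inv_mul_frobSq_le {a b : ℝ} (hdiag : ∀ α, |M α α| ≤ a)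
    (hoff : ∀ α β, α ≠ β → |M α β| ≤ b) : (n : ℝ)⁻¹ * frobSq M ≤ n * b ^ 2 + a ^ 2 := by
  have hentry : ∀ α β, M α β ^ 2 ≤ b ^ 2 + if α = β then a ^ 2 else 0 := fun α β => by
    rcases eq_or_ne α β with rfl | hαβ
    · rw [if_pos rfl]
      exact (sq_le_sq' (neg_le_of_abs_le (hdiag α)) (le_of_abs_le (hdiag α))).trans
        (le_add_of_nonneg_left (sq_nonneg b))
    · rw [if_neg hαβ, add_zero]
      exact sq_le_sq' (neg_le_of_abs_le (hoff α β hαβ)) (le_of_abs_le (hoff α β hαβ))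
  have hsum : frobSq M ≤ n * (n * b ^ 2 + a ^ 2) := by
    refine (Finset.sum_le_sum fun α _ => Finset.sum_le_sum fun β _ => hentry α β).trans ?_
    simp [Finset.sum_add_distrib, mul_add]
  rcases n.eq_zero_or_pos with rfl | hn
  · simpa using sq_nonneg a
  · rwa [inv_mul_le_iff₀ (Nat.cast_pos.2 hn)]

end Frobenius

section Network

variable {σ σ' : ℝ → ℝ} {K : ℝ≥0} {L ℓ : ℕ} {d : ℕ → ℕ → ℕ} {Ω : Type*} [MeasurableSpace Ω]
  {Pr : Measure Ω} {W : (n : ℕ) → (ℓ : ℕ) → Ω → Fin (d n (ℓ + 1)) → Fin (d n ℓ) → ℝ}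
  {X0 : (n : ℕ) → Matrix (Fin (d n 0)) (Fin n) ℝ} {e : ℕ → ℝ}

-- The failure probability at deviation level `u = 4 log n` is `O(n² · n⁻⁴)`, hence summable.
lemma NormalizedActivation.ae_eventually_nearOrthonormal_netLayer_succ
    (h : NormalizedActivation σ σ' K) (hW : ∀ n, IsGaussianWeights L (d n) Pr (W n)) (hℓ : ℓ < L)
    (hd : Tendsto (fun n => √(d n (ℓ + 1))) atTop atTop) (he : Tendsto e atTop (𝓝 0))
    (hX : ∀ᵐ ω ∂Pr, ∀ᶠ n in atTop,
      NearOrthonormal (e n) (netLayer σ (d n) n (fun m => W n m ω) (X0 n) ℓ)) :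
    ∀ᵐ ω ∂Pr, ∀ᶠ n in atTop,
      NearOrthonormal (layerConst σ K * e n + 4 * Real.log n / √(d n (ℓ + 1)))
        (netLayer σ (d n) n (fun m => W n m ω) (X0 n) (ℓ + 1)) := by
  obtain ⟨s, C, hs, hstep⟩ := h.exists_gaussianMat_not_nearOrthonormal_layer_le
  have hfail : ∀ᶠ n in atTop,
      Pr {ω | NearOrthonormal (e n) (netLayer σ (d n) n (fun m => W n m ω) (X0 n) ℓ) ∧
          ¬ NearOrthonormal (layerConst σ K * e n + 4 * Real.log n / √(d n (ℓ + 1)))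
            (netLayer σ (d n) n (fun m => W n m ω) (X0 n) (ℓ + 1))} ≤
        (n ^ 2 : ℕ) * ENNReal.ofReal (C * Real.exp (-(4 * Real.log n))) := by
    filter_upwards [he.eventually_le_const one_half_pos, hd.eventually_gt_atTop 0,
      hd.inv_tendsto_atTop.eventually_le_const hs] with n hen hdn hsn
    exact (hW n).measure_netLayer_mem_and_succ_notMem_le h.lipschitz.continuous.measurable (X0 n) hℓ
      (measurableSet_nearOrthonormal _) (measurableSet_nearOrthonormal _)
      fun X hX => hstep hX hen (Nat.cast_pos.1 (Real.sqrt_pos.1 hdn)) hsn _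
  filter_upwards [hX, ae_eventually_notMem_of_eventually_le hfail
    (tsum_natCast_sq_mul_ofReal_exp_neg_log_ne_top C)] with ω hXω hω
  filter_upwards [hXω, hω] with n hXn hn
  exact not_not.1 fun hnot => hn ⟨hXn, hnot⟩

lemma NormalizedActivation.exists_ae_eventually_nearOrthonormal_netLayer
    (h : NormalizedActivation σ σ' K) (hW : ∀ n, IsGaussianWeights L (d n) Pr (W n))
    (hd : ∀ ℓ, 1 ≤ ℓ → ℓ ≤ L →
      (fun n : ℕ => (n : ℝ) ^ ((1 : ℝ) / 4) * Real.log n) =o[atTop] fun n => √(d n ℓ))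
    (he : Tendsto (fun n : ℕ => e n * (n : ℝ) ^ ((1 : ℝ) / 4)) atTop (𝓝 0))
    (hX0 : ∀ᶠ n in atTop, NearOrthonormal (e n) (X0 n)) (hℓ : ℓ ≤ L) :
    ∃ e' : ℕ → ℝ, Tendsto (fun n : ℕ => e' n * (n : ℝ) ^ ((1 : ℝ) / 4)) atTop (𝓝 0) ∧
      ∀ᵐ ω ∂Pr, ∀ᶠ n in atTop,
        NearOrthonormal (e' n) (netLayer σ (d n) n (fun m => W n m ω) (X0 n) ℓ) := by
  induction ℓ with
  | zero => exact ⟨e, he, .of_forall fun _ => hX0⟩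
  | succ ℓ ih =>
    obtain ⟨e', he', hX⟩ := ih (Nat.le_of_succ_le hℓ)
    have hdℓ := hd (ℓ + 1) (Nat.le_add_left 1 ℓ) hℓ
    refine ⟨_, ?_, h.ae_eventually_nearOrthonormal_netLayer_succ hW hℓ
      (tendsto_sqrt_atTop_of_rpow_mul_log_isLittleO hdℓ)
      (tendsto_zero_of_tendsto_mul_rpow_zero (by norm_num) he') hX⟩
    have hlim := (he'.const_mul (layerConst σ K)).add (hdℓ.tendsto_div_nhds_zero.const_mul 4)
    rw [mul_zero, mul_zero, add_zero] at hlim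
    exact hlim.congr fun n => by ring

-- There are `n²` off-diagonal errors of size `ε²`, contributing `n ε⁴ = (ε n^{1/4})⁴` after
-- normalization: this is where the exponent `1/4` comes from.
lemma NormalizedActivation.tendsto_inv_mul_frobSq_secondMoment_sub_linearizedMoment
    (h : NormalizedActivation σ σ' K) {m : ℕ → ℕ} {X : (n : ℕ) → Matrix (Fin (m n)) (Fin n) ℝ}
    (he : Tendsto (fun n : ℕ => e n * (n : ℝ) ^ ((1 : ℝ) / 4)) atTop (𝓝 0))
    (hX : ∀ᶠ n in atTop, NearOrthonormal (e n) (X n)) :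
    Tendsto (fun n : ℕ => (n : ℝ)⁻¹ *
      frobSq (secondMoment σ (X n) - linearizedMoment (∫ x, σ' x ∂stdGaussian) (X n)))
      atTop (𝓝 0) := by
  have he0 : Tendsto e atTop (𝓝 0) := tendsto_zero_of_tendsto_mul_rpow_zero (by norm_num) he
  have hbound : Tendsto (fun n : ℕ =>
      n * (offDiagConst σ K * e n ^ 2) ^ 2 + (diagConst σ K * e n) ^ 2) atTop (𝓝 0) := by
    have hlim := ((he.pow 4).const_mul (offDiagConst σ K ^ 2)).add
      ((he0.const_mul (diagConst σ K)).pow 2)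
    refine (hlim.congr fun n => ?_).trans_eq (by simp)
    have hroot : ((n : ℝ) ^ ((1 : ℝ) / 4)) ^ 4 = n := by
      rw [← Real.rpow_mul_natCast (Nat.cast_nonneg n)]
      norm_num
    rw [mul_pow (e n), hroot]
    ring
  refine squeeze_zero' (.of_forall fun n => ?_) ?_ hbound
  · exact mul_nonneg (inv_nonneg.2 n.cast_nonneg) (frobSq_nonneg _)
  · filter_upwards [hX, he0.eventually_le_const one_half_pos] with n hXn hen
    exact inv_mul_frobSq_le
      (h.abs_secondMoment_sub_linearizedMoment_diag_le hXn (hen.trans one_half_lt_one.le))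
      fun α β => h.abs_secondMoment_sub_linearizedMoment_offDiag_le hXn hen

end Network

theorem phi_difference_general
    {σ σ' : ℝ → ℝ} {K : ℝ≥0} (h : NormalizedActivation σ σ' K) {L : ℕ} {d : ℕ → ℕ → ℕ}
    {Ω : Type*} [MeasurableSpace Ω] {Pr : Measure Ω}
    {W : (n : ℕ) → (ℓ : ℕ) → Ω → Fin (d n (ℓ + 1)) → Fin (d n ℓ) → ℝ}
    (hW : ∀ n, IsGaussianWeights L (d n) Pr (W n))
    {X0 : (n : ℕ) → Matrix (Fin (d n 0)) (Fin n) ℝ} {ε : ℕ → ℝ}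
    (hX0 : ∀ᶠ n in atTop, NearOrthonormal (ε n) (X0 n))
    (hε : Tendsto (fun n : ℕ => ε n * (n : ℝ) ^ ((1 : ℝ) / 4)) atTop (𝓝 0))
    (hd : ∀ ℓ, 1 ≤ ℓ → ℓ ≤ L →
      (fun n : ℕ => (n : ℝ) ^ ((1 : ℝ) / 4) * Real.log n) =o[atTop] fun n => √(d n ℓ))
    {ℓ : ℕ} (hℓ : ℓ ≤ L) :
    ∀ᵐ ω ∂Pr, Tendsto
      (fun n : ℕ => (n : ℝ)⁻¹ * frobSq
        (secondMoment σ (netLayer σ (d n) n (fun m => W n m ω) (X0 n) ℓ) -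
          linearizedMoment (∫ x, σ' x ∂stdGaussian)
            (netLayer σ (d n) n (fun m => W n m ω) (X0 n) ℓ)))
      atTop (𝓝 0) := by
  obtain ⟨e, he, hX⟩ := h.exists_ae_eventually_nearOrthonormal_netLayer hW hd hε hX0 hℓ
  filter_upwards [hX] with ω hXω
  exact h.tendsto_inv_mul_frobSq_secondMoment_sub_linearizedMoment he hXω

theorem phi_difference
    (L : ℕ) (hL : 1 ≤ L)
    (d : ℕ → ℕ → ℕ)
    (σ σ' σ'' : ℝ → ℝ) (lamσ : ℝ)
    (hderiv1 : ∀ x, HasDerivAt σ (σ' x) x)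
    (hderiv2 : ∀ x, HasDerivAt σ' (σ'' x) x)
    (hσ'bdd : ∀ x, |σ' x| ≤ lamσ) (hσ''bdd : ∀ x, |σ'' x| ≤ lamσ)
    (hmean : (∫ x, σ x ∂stdGaussian) = 0)
    (hvar : (∫ x, (σ x) ^ 2 ∂stdGaussian) = 1)
    (Ω : Type*) [MeasurableSpace Ω] (Pr : Measure Ω) [IsProbabilityMeasure Pr]
    (W : (n : ℕ) → (ℓ : ℕ) → Ω → Fin (d n (ℓ + 1)) → Fin (d n ℓ) → ℝ)
    (hW : ∀ n : ℕ, Measure.map (fun ω => fun ℓ : Fin L => W n ℓ ω) Pr =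
      Measure.pi (fun ℓ : Fin L => gaussianMat (d n ((ℓ : ℕ) + 1)) (d n (ℓ : ℕ))))
    (X0 : (n : ℕ) → Matrix (Fin (d n 0)) (Fin n) ℝ)
    (ε : ℕ → ℝ) (B : ℝ)
    (hX0orth : ∀ n, IsOrthonormal (ε n) B (X0 n))
    (hε : Tendsto (fun n : ℕ => ε n * (n : ℝ) ^ ((1 : ℝ) / 4)) atTop (𝓝 0))
    (γ : ℕ → ℝ) (hγ : ∀ ℓ, 1 ≤ ℓ → ℓ ≤ L → 0 < γ ℓ)
    (hdim : ∀ ℓ, 1 ≤ ℓ → ℓ ≤ L →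
      Tendsto (fun n : ℕ => (n : ℝ) / (d n ℓ : ℝ)) atTop (𝓝 (γ ℓ))) :
    -- for each fixed layer index `ℓ + 1 ∈ {1,…,L}`
    ∀ ℓ < L, ∀ᵐ ω ∂Pr,
      Tendsto
        (fun n : ℕ =>
          (n : ℝ)⁻¹ * frobSq
            ((Matrix.of fun α β : Fin n =>
                ∫ w, σ (∑ i, w i * netLayer σ (d n) n (fun m => W n m ω) (X0 n) ℓ i α) *
                  σ (∑ i, w i * netLayer σ (d n) n (fun m => W n m ω) (X0 n) ℓ i β)
                  ∂gaussianVec (d n ℓ)) -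
              ((∫ x, σ' x ∂stdGaussian) ^ 2 •
                  ((netLayer σ (d n) n (fun m => W n m ω) (X0 n) ℓ)ᵀ *
                    netLayer σ (d n) n (fun m => W n m ω) (X0 n) ℓ) +
                (1 - (∫ x, σ' x ∂stdGaussian) ^ 2) • (1 : Matrix (Fin n) (Fin n) ℝ))))
        atTop (𝓝 0) := by
  have h : NormalizedActivation σ σ' lamσ.toNNReal :=
    ⟨hderiv1, lipschitzWith_of_abs_hasDerivAt_le hderiv1 hσ'bdd,
      lipschitzWith_of_abs_hasDerivAt_le hderiv2 hσ''bdd, hmean, hvar⟩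
  intro ℓ hℓ
  exact phi_difference_general h hW (.of_forall fun n => (hX0orth n).nearOrthonormal) hε
    (fun m hm hmL => rpow_mul_log_isLittleO_sqrt_of_tendsto_div (hγ m hm hmL) (hdim m hm hmL)) hℓ.le
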